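/- arXiv:1111.4152 — 9 statements merged into one kernel-verified Lean document; each statement's English description precedes it below -/
import Mathlib

section
/- Let k be a field of characteristic different from 2 and let q₁, q₂, q₃ ∈ k[x,z] be binary quadratic forms. Then −4·R(q₁,q₂,q₃) = (Ω₁₂ ∘ Ω₂₃ ∘ Ω₃₁)(q₁(x₁,z₁)·q₂(x₂,z₂)·q₃(x₃,z₃)), where the right-hand side, a priori a polynomial in k[x₁,z₁,x₂,z₂,x₃,z₃], is a constant. -/
open MvPolynomial

/-- The determinant `R(q₁,q₂,q₃)` of three binary quadratic forms in the basis `x², xz, z²`. -/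
noncomputable def Rdet {k : Type*} [CommRing k] (q₁ q₂ q₃ : MvPolynomial (Fin 2) k) : k :=
  Matrix.det
    !![coeff (Finsupp.single 0 2) q₁, coeff (Finsupp.single 0 1 + Finsupp.single 1 1) q₁,
         coeff (Finsupp.single 1 2) q₁;
       coeff (Finsupp.single 0 2) q₂, coeff (Finsupp.single 0 1 + Finsupp.single 1 1) q₂,
         coeff (Finsupp.single 1 2) q₂;
       coeff (Finsupp.single 0 2) q₃, coeff (Finsupp.single 0 1 + Finsupp.single 1 1) q₃,
         coeff (Finsupp.single 1 2) q₃]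

/-- The polynomial ring `k[x₁,z₁,x₂,z₂,x₃,z₃]`, indexed so that `(i,0) = xᵢ₊₁`, `(i,1) = zᵢ₊₁`. -/
abbrev P6 (k : Type*) [CommSemiring k] := MvPolynomial (Fin 3 × Fin 2) k

/-- The Cayley operator `Ω_{ij} = ∂²/∂xᵢ∂zⱼ − ∂²/∂zᵢ∂xⱼ`. -/
noncomputable def Omega {k : Type*} [CommRing k] (i j : Fin 3) (p : P6 k) : P6 k :=
  pderiv (i, (0 : Fin 2)) (pderiv (j, (1 : Fin 2)) p) -
    pderiv (i, (1 : Fin 2)) (pderiv (j, (0 : Fin 2)) p)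

/-- View `q(x,z)` as the polynomial `q(xᵢ,zᵢ)` in `k[x₁,z₁,x₂,z₂,x₃,z₃]`. -/
noncomputable def embed {k : Type*} [CommSemiring k] (i : Fin 3)
    (q : MvPolynomial (Fin 2) k) : P6 k :=
  rename (fun j => (i, j)) q

theorem quad_form_eq {k : Type*} [Field k] (q : MvPolynomial (Fin 2) k)
    (h : q.IsHomogeneous 2) :
    ∃ a b c : k, q = C a * X 0 ^ 2 + C b * (X 0 * X 1) + C c * X 1 ^ 2 ∧
      coeff (Finsupp.single 0 2) q = a ∧
      coeff (Finsupp.single 0 1 + Finsupp.single 1 1) q = b ∧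
      coeff (Finsupp.single 1 2) q = c := by
  refine ⟨_, _, _, ?_, rfl, rfl, rfl⟩
  have e1 : (X 0 ^ 2 : MvPolynomial (Fin 2) k) = monomial (Finsupp.single 0 2) 1 := by
    rw [X_pow_eq_monomial]
  have e2 : (X 1 ^ 2 : MvPolynomial (Fin 2) k) = monomial (Finsupp.single 1 2) 1 := by
    rw [X_pow_eq_monomial]
  have e3 : (X 0 * X 1 : MvPolynomial (Fin 2) k) =
      monomial (Finsupp.single 0 1 + Finsupp.single 1 1) 1 := by
    simp [X, monomial_mul]
  ext m
  rw [e1, e2, e3]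
  simp only [coeff_add, coeff_C_mul, coeff_monomial]
  have key : ∀ n : Fin 2 →₀ ℕ, n = m ↔ (n 0 = m 0 ∧ n 1 = m 1) := by
    intro n
    rw [Finsupp.ext_iff, Fin.forall_fin_two]
  by_cases hm : m 0 + m 1 = 2
  · have hc : (m 0 = 2 ∧ m 1 = 0) ∨ (m 0 = 1 ∧ m 1 = 1) ∨ (m 0 = 0 ∧ m 1 = 2) := by omega
    rcases hc with ⟨h0, h1⟩ | ⟨h0, h1⟩ | ⟨h0, h1⟩
    · have : Finsupp.single 0 2 = m := by rw [key]; simp [h0, h1]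
      simp [key, h0, h1, this]
    · have : Finsupp.single 0 1 + Finsupp.single 1 1 = m := by rw [key]; simp [h0, h1]
      simp [key, h0, h1, this]
    · have : Finsupp.single 1 2 = m := by rw [key]; simp [h0, h1]
      simp [key, h0, h1, this]
  · have hz : coeff m q = 0 := by
      apply h.coeff_eq_zero
      rw [Finsupp.degree_eq_sum, Fin.sum_univ_two]
      exact hm
    rw [hz, if_neg, if_neg, if_neg] <;> first | simp | skip
    all_goals
      rintro rfl
      simp at hm

set_option maxHeartbeats 4000000 in
/-- For binary quadratic forms `q₁,q₂,q₃` over a field of characteristic `≠ 2`,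
`−4·R(q₁,q₂,q₃) = (Ω₁₂ ∘ Ω₂₃ ∘ Ω₃₁)(q₁(x₁,z₁)·q₂(x₂,z₂)·q₃(x₃,z₃))`; in particular the
right-hand side is a constant polynomial. -/
theorem statement3 {k : Type*} [Field k] (hchar : (2 : k) ≠ 0)
    (q₁ q₂ q₃ : MvPolynomial (Fin 2) k)
    (h₁ : q₁.IsHomogeneous 2) (h₂ : q₂.IsHomogeneous 2) (h₃ : q₃.IsHomogeneous 2) :
    Omega 0 1 (Omega 1 2 (Omega 2 0 (embed 0 q₁ * embed 1 q₂ * embed 2 q₃))) =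
      C (-4 * Rdet q₁ q₂ q₃) := by
  obtain ⟨a₁, b₁, c₁, e₁, ha₁, hb₁, hc₁⟩ := quad_form_eq q₁ h₁
  obtain ⟨a₂, b₂, c₂, e₂, ha₂, hb₂, hc₂⟩ := quad_form_eq q₂ h₂
  obtain ⟨a₃, b₃, c₃, e₃, ha₃, hb₃, hc₃⟩ := quad_form_eq q₃ h₃
  rw [Rdet, ha₁, hb₁, hc₁, ha₂, hb₂, hc₂, ha₃, hb₃, hc₃, Matrix.det_fin_three, e₁, e₂, e₃]
  clear ha₁ hb₁ hc₁ ha₂ hb₂ hc₂ ha₃ hb₃ hc₃ e₁ e₂ e₃ h₁ h₂ h₃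
  have h4 : (C (4 : k) : P6 k) = 4 := map_ofNat C 4
  have d : ∀ i j : Fin 3, ∀ a b c : k,
      (pderiv (i, (0 : Fin 2)) (embed j (C a * X 0 ^ 2 + C b * (X 0 * X 1) + C c * X 1 ^ 2))
        = if i = j then C (2 * a) * X (j, 0) + C b * X (j, 1) else 0) ∧
      (pderiv (i, (1 : Fin 2)) (embed j (C a * X 0 ^ 2 + C b * (X 0 * X 1) + C c * X 1 ^ 2))
        = if i = j then C b * X (j, 0) + C (2 * c) * X (j, 1) else 0) := by
    intro i j a b c
    have h2 : (C (2 : k) : P6 k) = 2 := map_ofNat C 2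
    by_cases hij : i = j
    · subst hij
      constructor <;>
      · simp [embed, pderiv_X, Derivation.leibniz_pow, h2]
        ring
    · have hji : ¬ j = i := fun h => hij h.symm
      simp [embed, pderiv_X, Derivation.leibniz_pow, hij, hji]
  have dl : ∀ (i j : Fin 3) (s : Fin 2) (a b : k),
      pderiv (i, s) (C a * X (j, 0) + C b * X (j, 1) : P6 k)
        = if i = j then (if s = 0 then C a else C b) else 0 := by
    intro i j s a b
    by_cases hij : i = j
    · subst hij
      fin_cases s <;> simp [pderiv_X]
    · have hji : ¬ j = i := fun h => hij h.symm
      simp [pderiv_X, hij, hji]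
  generalize hE₁ : embed 0 (C a₁ * X 0 ^ 2 + C b₁ * (X 0 * X 1) + C c₁ * X 1 ^ 2) = E₁
  generalize hE₂ : embed 1 (C a₂ * X 0 ^ 2 + C b₂ * (X 0 * X 1) + C c₂ * X 1 ^ 2) = E₂
  generalize hE₃ : embed 2 (C a₃ * X 0 ^ 2 + C b₃ * (X 0 * X 1) + C c₃ * X 1 ^ 2) = E₃
  have d1 := fun i => d i 0 a₁ b₁ c₁
  have d2 := fun i => d i 1 a₂ b₂ c₂
  have d3 := fun i => d i 2 a₃ b₃ c₃
  rw [hE₁] at d1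
  rw [hE₂] at d2
  rw [hE₃] at d3
  have s1 : Omega 2 0 (E₁ * E₂ * E₃) =
      E₂ * ((C b₁ * X (0, 0) + C (2 * c₁) * X (0, 1)) * (C (2 * a₃) * X (2, 0) + C b₃ * X (2, 1))
        - (C (2 * a₁) * X (0, 0) + C b₁ * X (0, 1))
          * (C b₃ * X (2, 0) + C (2 * c₃) * X (2, 1))) := by
    simp only [Omega, pderiv_mul, map_add, (d1 _).1, (d1 _).2, (d2 _).1, (d2 _).2, (d3 _).1,
      (d3 _).2]
    simp [-map_mul]
    ring
  have s2 : Omega 1 2 (E₂ * ((C b₁ * X (0, 0) + C (2 * c₁) * X (0, 1)) * (C (2 * a₃) * X (2, 0) + C b₃ * X (2, 1))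
        - (C (2 * a₁) * X (0, 0) + C b₁ * X (0, 1)) * (C b₃ * X (2, 0) + C (2 * c₃) * X (2, 1)))) =
      (C (2 * a₂) * X (1, 0) + C b₂ * X (1, 1)) * ((C b₁ * X (0, 0) + C (2 * c₁) * X (0, 1)) * C b₃
        - (C (2 * a₁) * X (0, 0) + C b₁ * X (0, 1)) * C (2 * c₃))
      - (C b₂ * X (1, 0) + C (2 * c₂) * X (1, 1)) * ((C b₁ * X (0, 0) + C (2 * c₁) * X (0, 1)) * C (2 * a₃)
        - (C (2 * a₁) * X (0, 0) + C b₁ * X (0, 1)) * C b₃) := by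
    simp only [Omega, pderiv_mul, map_sub, dl, (d2 _).1, (d2 _).2]
    simp [-map_mul, -C_mul, -map_add, pderiv_mul, dl, (d2 _).1, (d2 _).2]
    ring
  rw [s1, s2]
  have h2 : (C (2 : k) : P6 k) = 2 := map_ofNat C 2
  simp only [Omega, pderiv_mul, map_sub, dl, pderiv_C]
  simp [-map_mul, -C_mul, -map_add, pderiv_mul, dl]
  simp only [map_mul, map_add, map_sub, map_neg, h2, h4]
  ring
end

section
/- Let k be a field of characteristic different from 2, let q₁, q₂, q₃ ∈ k[x,z] be binary quadratic forms, and let f ∈ k[x,z] be any binary quadratic form. Then (1/2)·R(q₁,q₂,q₃)·f = (f,q₁*)₂·q₁ + (f,q₂*)₂·q₂ + (f,q₃*)₂·q₃, where the second transvectants (f,q_i*)₂ are constants. -/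
open MvPolynomial

/-- Iterated partial derivative in the variable `x` (the variable `0`). -/
noncomputable def dX {k : Type*} [CommSemiring k] (n : ℕ) (p : MvPolynomial (Fin 2) k) :
    MvPolynomial (Fin 2) k :=
  (fun q => pderiv (0 : Fin 2) q)^[n] p

/-- Iterated partial derivative in the variable `z` (the variable `1`). -/
noncomputable def dZ {k : Type*} [CommSemiring k] (n : ℕ) (p : MvPolynomial (Fin 2) k) :
    MvPolynomial (Fin 2) k :=
  (fun q => pderiv (1 : Fin 2) q)^[n] p

/-- The `h`-th transvectant of two binary forms of degrees `r₁` and `r₂`. -/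
noncomputable def transvectant {k : Type*} [Field k] (r₁ r₂ h : ℕ)
    (f g : MvPolynomial (Fin 2) k) : MvPolynomial (Fin 2) k :=
  C ((((r₁ - h).factorial * (r₂ - h).factorial : ℕ) : k) /
      (((r₁.factorial * r₂.factorial : ℕ)) : k)) *
    ∑ j ∈ Finset.range (h + 1),
      C ((-1 : k) ^ j * (h.choose j : k)) * (dX (h - j) (dZ j f) * dX j (dZ (h - j) g))

/-- The quadratic form with coefficients `a, b, c`. -/
noncomputable def quadForm {k : Type*} [CommRing k] (a b c : k) : MvPolynomial (Fin 2) k :=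
  C a * X 0 ^ 2 + C b * (X 0 * X 1) + C c * X 1 ^ 2

theorem exists_quadForm {k : Type*} [Field k] (q : MvPolynomial (Fin 2) k)
    (h : q.IsHomogeneous 2) : ∃ a b c : k, q = quadForm a b c ∧
      coeff (Finsupp.single 0 2) q = a ∧
      coeff (Finsupp.single 0 1 + Finsupp.single 1 1) q = b ∧
      coeff (Finsupp.single 1 2) q = c := by
  refine ⟨_, _, _, ?_, rfl, rfl, rfl⟩
  have e : ∀ a b c : k, quadForm a b c = monomial (Finsupp.single 0 2) a +
      monomial (Finsupp.single 0 1 + Finsupp.single 1 1) b + monomial (Finsupp.single 1 2) c := by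
    intro a b c
    simp only [quadForm, X, C_mul_monomial, monomial_mul, monomial_pow]
    simp
  rw [e]
  ext m
  simp only [coeff_add, coeff_monomial]
  by_cases hm : m 0 + m 1 = 2
  · have key : m = Finsupp.single 0 2 ∨ m = Finsupp.single 0 1 + Finsupp.single 1 1 ∨
        m = Finsupp.single 1 2 := by
      have : m 0 = 2 ∧ m 1 = 0 ∨ m 0 = 1 ∧ m 1 = 1 ∨ m 0 = 0 ∧ m 1 = 2 := by omega
      rcases this with ⟨h0, h1⟩ | ⟨h0, h1⟩ | ⟨h0, h1⟩
      · left; ext i; fin_cases i <;> simp [h0, h1]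
      · right; left; ext i; fin_cases i <;> simp [h0, h1]
      · right; right; ext i; fin_cases i <;> simp [h0, h1]
    rcases key with rfl | rfl | rfl <;> simp [Finsupp.ext_iff, Fin.forall_fin_two]
  · have hz : coeff m q = 0 := by
      apply h.coeff_eq_zero
      simpa [Finsupp.degree_eq_sum, Fin.sum_univ_two] using hm
    rw [hz, if_neg, if_neg, if_neg]
    · simp
    all_goals rintro rfl; simp at hm

theorem transvectant_one {k : Type*} [Field k] (h2 : (2 : k) ≠ 0) (a b c d e f : k) :
    transvectant 2 2 1 (quadForm a b c) (quadForm d e f) =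
      quadForm ((a * e - b * d) / 2) (a * f - c * d) ((b * f - c * e) / 2) := by
  obtain ⟨t, ht⟩ : ∃ t : k, t * 2 = 1 := ⟨2⁻¹, inv_mul_cancel₀ h2⟩
  have hC : (C t : MvPolynomial (Fin 2) k) * 2 = 1 := by
    rw [← C_1, ← ht, C_mul]; rfl
  have h4 : (((2 - 1).factorial * (2 - 1).factorial : ℕ) : k) /
      ((Nat.factorial 2 * Nat.factorial 2 : ℕ) : k) = t * t := by
    rw [div_eq_iff]
    · norm_num [Nat.factorial]; linear_combination (-2 * t - 1) * ht
    · norm_num [Nat.factorial]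
      intro h; exact h2 (by simpa [h] using (show (2:k) * 2 = 4 by norm_num))
  have hd : ∀ x : k, x / 2 = x * t := by
    intro x; rw [div_eq_iff h2]; linear_combination -x * ht
  rw [transvectant, h4, hd, hd]
  simp [quadForm, dX, dZ, Finset.sum_range_succ, pderiv_X]
  linear_combination (C t * (C a * C e - C b * C d) * X 0 ^ 2 +
    (C t * 2 + 1) * (C a * C f - C c * C d) * (X 0 * X 1) +
    C t * (C b * C f - C c * C e) * X 1 ^ 2) * hC

theorem transvectant_two {k : Type*} [Field k] (h2 : (2 : k) ≠ 0) (a b c d e f : k) :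
    constantCoeff (transvectant 2 2 2 (quadForm a b c) (quadForm d e f)) =
      a * f - b * e / 2 + c * d := by
  rw [transvectant]
  simp [quadForm, dX, dZ, Finset.sum_range_succ, pderiv_X, Nat.factorial]
  have hc : constantCoeff (2 : MvPolynomial (Fin 2) k) = 2 := map_ofNat _ 2
  have h4 : (4 : k) = 2 * 2 := by norm_num
  rw [hc, h4]
  field_simp
  ring

/-- For binary quadratic forms `q₁,q₂,q₃` over a field of characteristic `≠ 2` and any binary
quadratic form `f`, `(1/2)·R(q₁,q₂,q₃)·f = (f,q₁*)₂·q₁ + (f,q₂*)₂·q₂ + (f,q₃*)₂·q₃`, where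
`q₁* = (q₂,q₃)₁`, `q₂* = (q₃,q₁)₁`, `q₃* = (q₁,q₂)₁` and the `(f,qᵢ*)₂` are constants. -/
theorem statement5 {k : Type*} [Field k] (hchar : (2 : k) ≠ 0)
    (q₁ q₂ q₃ : MvPolynomial (Fin 2) k)
    (h₁ : q₁.IsHomogeneous 2) (h₂ : q₂.IsHomogeneous 2) (h₃ : q₃.IsHomogeneous 2)
    (f : MvPolynomial (Fin 2) k) (hf : f.IsHomogeneous 2) :
    C ((1 / 2 : k) * Rdet q₁ q₂ q₃) * f =
      C (constantCoeff (transvectant 2 2 2 f (transvectant 2 2 1 q₂ q₃))) * q₁ +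
      C (constantCoeff (transvectant 2 2 2 f (transvectant 2 2 1 q₃ q₁))) * q₂ +
      C (constantCoeff (transvectant 2 2 2 f (transvectant 2 2 1 q₁ q₂))) * q₃ := by
  obtain ⟨a₁, b₁, c₁, e₁, ha₁, hb₁, hc₁⟩ := exists_quadForm q₁ h₁
  obtain ⟨a₂, b₂, c₂, e₂, ha₂, hb₂, hc₂⟩ := exists_quadForm q₂ h₂
  obtain ⟨a₃, b₃, c₃, e₃, ha₃, hb₃, hc₃⟩ := exists_quadForm q₃ h₃
  obtain ⟨a, b, c, e, -, -, -⟩ := exists_quadForm f hf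
  rw [Rdet, ha₁, hb₁, hc₁, ha₂, hb₂, hc₂, ha₃, hb₃, hc₃, e₁, e₂, e₃, e]
  simp only [transvectant_one hchar, transvectant_two hchar, Matrix.det_fin_three]
  have mulq : ∀ s a b c : k, C s * quadForm a b c = quadForm (s * a) (s * b) (s * c) := by
    intro s a b c; simp only [quadForm, C_mul]; ring
  have addq : ∀ a b c d e f : k, quadForm a b c + quadForm d e f =
      quadForm (a + d) (b + e) (c + f) := by
    intro a b c d e f; simp only [quadForm, C_add]; ring
  simp only [mulq, addq]
  congr 1 <;> simp <;> field_simp <;> ring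
end

section
/- Let k be a field of characteristic different from 2, let q₁, q₂, q₃ ∈ k[x,z] be binary quadratic forms, and let f ∈ k[x,z] be any binary quadratic form. Then R(q₁,q₂,q₃)·f = 2·((f,q₁)₂·q₁* + (f,q₂)₂·q₂* + (f,q₃)₂·q₃*), where the second transvectants (f,q_i)₂ are constants. -/
open MvPolynomial

lemma quad_form {k : Type*} [Field k] (q : MvPolynomial (Fin 2) k) (h : q.IsHomogeneous 2) :
    ∃ a b c : k, q = C a * X 0 ^ 2 + C b * (X 0 * X 1) + C c * X 1 ^ 2 := by
  refine ⟨coeff (Finsupp.single 0 2) q, coeff (Finsupp.single 0 1 + Finsupp.single 1 1) q,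
    coeff (Finsupp.single 1 2) q, ?_⟩
  have e1 : (X 0 ^ 2 : MvPolynomial (Fin 2) k) = monomial (Finsupp.single 0 2) 1 := by
    rw [X_pow_eq_monomial]
  have e2 : (X 0 * X 1 : MvPolynomial (Fin 2) k)
      = monomial (Finsupp.single 0 1 + Finsupp.single 1 1) 1 := by
    simp [X, monomial_mul]
  have e3 : (X 1 ^ 2 : MvPolynomial (Fin 2) k) = monomial (Finsupp.single 1 2) 1 := by
    rw [X_pow_eq_monomial]
  rw [e1, e2, e3]
  ext m
  simp only [coeff_add, coeff_C_mul, coeff_monomial]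
  by_cases hm : m 0 + m 1 = 2
  · have key : (m = Finsupp.single 0 2) ∨ (m = Finsupp.single 0 1 + Finsupp.single 1 1) ∨
        (m = Finsupp.single 1 2) := by
      have : (m 0 = 2 ∧ m 1 = 0) ∨ (m 0 = 1 ∧ m 1 = 1) ∨ (m 0 = 0 ∧ m 1 = 2) := by omega
      rcases this with ⟨u, v⟩ | ⟨u, v⟩ | ⟨u, v⟩
      · left; ext i; fin_cases i <;> simp [u, v]
      · right; left; ext i; fin_cases i <;> simp [u, v]
      · right; right; ext i; fin_cases i <;> simp [u, v]
    rcases key with rfl | rfl | rfl <;> simp [Finsupp.ext_iff, Fin.forall_fin_two]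
  · have h0 : coeff m q = 0 := by
      apply h.coeff_eq_zero
      simpa [Finsupp.degree_eq_sum] using hm
    rw [h0, if_neg, if_neg, if_neg]
    · simp
    all_goals
      rintro rfl
      simp at hm

lemma coeffs_quad {k : Type*} [Field k] (a b c : k) :
    coeff (Finsupp.single 0 2)
      (C a * X 0 ^ 2 + C b * (X 0 * X 1) + C c * X 1 ^ 2 : MvPolynomial (Fin 2) k) = a ∧
    coeff (Finsupp.single 0 1 + Finsupp.single 1 1)
      (C a * X 0 ^ 2 + C b * (X 0 * X 1) + C c * X 1 ^ 2 : MvPolynomial (Fin 2) k) = b ∧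
    coeff (Finsupp.single 1 2)
      (C a * X 0 ^ 2 + C b * (X 0 * X 1) + C c * X 1 ^ 2 : MvPolynomial (Fin 2) k) = c := by
  have e2 : (X 0 * X 1 : MvPolynomial (Fin 2) k)
      = monomial (Finsupp.single 0 1 + Finsupp.single 1 1) 1 := by
    simp [X, monomial_mul]
  rw [X_pow_eq_monomial, X_pow_eq_monomial, e2]
  simp only [coeff_add, coeff_C_mul, coeff_monomial]
  simp [Finsupp.ext_iff, Fin.forall_fin_two]

lemma trans_two {k : Type*} [Field k] (a b c a' b' c' : k) :
    constantCoeff (transvectant 2 2 2 (C a * X 0 ^ 2 + C b * (X 0 * X 1) + C c * X 1 ^ 2)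
      (C a' * X 0 ^ 2 + C b' * (X 0 * X 1) + C c' * X 1 ^ 2)) =
    (1 / 4 : k) * (4 * a * c' - 2 * b * b' + 4 * c * a') := by
  simp [transvectant, dX, dZ, Finset.sum_range_succ, pderiv_X, pderiv_C, Derivation.leibniz,
    Derivation.leibniz_pow, Nat.factorial]
  norm_num
  left
  have h2 : constantCoeff (2 : MvPolynomial (Fin 2) k) = 2 := map_ofNat _ 2
  rw [h2]
  ring

lemma trans_one {k : Type*} [Field k] (a b c a' b' c' : k) :
    transvectant 2 2 1 (C a * X 0 ^ 2 + C b * (X 0 * X 1) + C c * X 1 ^ 2)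
      (C a' * X 0 ^ 2 + C b' * (X 0 * X 1) + C c' * X 1 ^ 2) =
    C (1 / 4 : k) * ((2 * C a * X 0 + C b * X 1) * (C b' * X 0 + 2 * C c' * X 1) -
      (2 * C a' * X 0 + C b' * X 1) * (C b * X 0 + 2 * C c * X 1)) := by
  simp [transvectant, dX, dZ, Finset.sum_range_succ, pderiv_X, pderiv_C, Derivation.leibniz,
    Derivation.leibniz_pow, Nat.factorial]
  norm_num
  left
  ring

/-- For binary quadratic forms `q₁,q₂,q₃` over a field of characteristic `≠ 2` and any binary
quadratic form `f`, `R(q₁,q₂,q₃)·f = 2·((f,q₁)₂·q₁* + (f,q₂)₂·q₂* + (f,q₃)₂·q₃*)`, where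
`q₁* = (q₂,q₃)₁`, `q₂* = (q₃,q₁)₁`, `q₃* = (q₁,q₂)₁` and the `(f,qᵢ)₂` are constants. -/
theorem statement6 {k : Type*} [Field k] (hchar : (2 : k) ≠ 0)
    (q₁ q₂ q₃ : MvPolynomial (Fin 2) k)
    (h₁ : q₁.IsHomogeneous 2) (h₂ : q₂.IsHomogeneous 2) (h₃ : q₃.IsHomogeneous 2)
    (f : MvPolynomial (Fin 2) k) (hf : f.IsHomogeneous 2) :
    C (Rdet q₁ q₂ q₃) * f =
      2 * (C (constantCoeff (transvectant 2 2 2 f q₁)) * transvectant 2 2 1 q₂ q₃ +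
           C (constantCoeff (transvectant 2 2 2 f q₂)) * transvectant 2 2 1 q₃ q₁ +
           C (constantCoeff (transvectant 2 2 2 f q₃)) * transvectant 2 2 1 q₁ q₂) := by
  obtain ⟨a₁, b₁, c₁, rfl⟩ := quad_form q₁ h₁
  obtain ⟨a₂, b₂, c₂, rfl⟩ := quad_form q₂ h₂
  obtain ⟨a₃, b₃, c₃, rfl⟩ := quad_form q₃ h₃
  obtain ⟨a, b, c, rfl⟩ := quad_form f hf
  have h4 : (4 : k) * (1 / 4) = 1 := by
    have : (4 : k) ≠ 0 := by
      have h : (4 : k) = 2 * 2 := by norm_num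
      rw [h]; exact mul_ne_zero hchar hchar
    field_simp
  have hT : (4 : MvPolynomial (Fin 2) k) * C (1 / 4 : k) = 1 := by
    have := congrArg (C : k → MvPolynomial (Fin 2) k) h4
    simpa only [map_mul, map_one, map_ofNat] using this
  simp only [trans_two, trans_one]
  simp only [Rdet, (coeffs_quad _ _ _).1, (coeffs_quad _ _ _).2.1, (coeffs_quad _ _ _).2.2,
    Matrix.det_fin_three]
  simp only [Matrix.of_apply, Matrix.cons_val]
  simp only [map_mul, map_add, map_sub, map_ofNat]
  generalize (C (1 / 4 : k) : MvPolynomial (Fin 2) k) = T at hT ⊢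
  have hT2 : 16 * T ^ 2 = 1 := by linear_combination (4 * T + 1) * hT
  linear_combination (-(C a₁ * C b₂ * C c₃ - C a₁ * C c₂ * C b₃ - C b₁ * C a₂ * C c₃ + C b₁ * C c₂ * C a₃
    + C c₁ * C a₂ * C b₃ - C c₁ * C b₂ * C a₃) * (C a * X 0 ^ 2 + C b * (X 0 * X 1) + C c * X 1 ^ 2)) * hT2
end

section
/- Let n ≥ 4 be an even integer and k a field with char k = 0 or char k > n. Let f ∈ k[x,z] be a binary form of degree n and let q₁, q₂, q₃ ∈ k[x,z] be binary quadratic forms. Then for every nonnegative m₁, m₂, m₃ with m₁+m₂+m₃ = n/2 the element δ₁^{m₁}δ₂^{m₂}δ₃^{m₃}(f) is a constant, and n!·R(q₁,q₂,q₃)^{n/2}·f(x,z) = Σ_{m₁+m₂+m₃ = n/2} ((n/2)!/(m₁!·m₂!·m₃!)) · q₁*(x,z)^{m₁} · q₂*(x,z)^{m₂} · q₃*(x,z)^{m₃} · (δ₁^{m₁}δ₂^{m₂}δ₃^{m₃} f). -/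
open MvPolynomial

/-- The operator `δ_q(φ) = φ_xx·q_zz − 2·φ_xz·q_xz + φ_zz·q_xx` attached to a binary
quadratic form `q`. -/
noncomputable def deltaOp {k : Type*} [CommRing k] (q p : MvPolynomial (Fin 2) k) :
    MvPolynomial (Fin 2) k :=
  dX 2 p * dZ 2 q - 2 * (pderiv (0 : Fin 2) (pderiv (1 : Fin 2) p)) *
      (pderiv (0 : Fin 2) (pderiv (1 : Fin 2) q)) + dZ 2 p * dX 2 q


namespace S8

variable {k : Type*} [Field k]

/-- Normal-ordered action of a polynomial symbol with polynomial coefficients on `f`. -/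
noncomputable def N (f : MvPolynomial (Fin 2) k) :
    MvPolynomial (Fin 2) (MvPolynomial (Fin 2) k) →ₗ[MvPolynomial (Fin 2) k]
      MvPolynomial (Fin 2) k :=
  (basisMonomials (Fin 2) (MvPolynomial (Fin 2) k)).constr ℕ
    (fun s : Fin 2 →₀ ℕ => dX (s 0) (dZ (s 1) f))

lemma pderiv_swap (i j : Fin 2) (f : MvPolynomial (Fin 2) k) :
    pderiv i (pderiv j f) = pderiv j (pderiv i f) := by
  have h : ⁅(pderiv i : Derivation k (MvPolynomial (Fin 2) k) (MvPolynomial (Fin 2) k)),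
      (pderiv j : Derivation k (MvPolynomial (Fin 2) k) (MvPolynomial (Fin 2) k))⁆ = 0 := by
    apply MvPolynomial.derivation_ext
    intro l
    rw [Derivation.commutator_apply]
    simp only [pderiv_X, Pi.single_apply]
    split_ifs <;> simp
  have h2 := congrArg (fun D : Derivation k (MvPolynomial (Fin 2) k) (MvPolynomial (Fin 2) k) => D f) h
  simp only [Derivation.commutator_apply, Derivation.coe_zero, Pi.zero_apply] at h2
  exact sub_eq_zero.mp h2

lemma N_monomial (f : MvPolynomial (Fin 2) k) (s : Fin 2 →₀ ℕ) (c : MvPolynomial (Fin 2) k) :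
    N f (monomial s c) = c * dX (s 0) (dZ (s 1) f) := by
  have : (monomial s c : MvPolynomial (Fin 2) (MvPolynomial (Fin 2) k)) =
      c • basisMonomials (Fin 2) (MvPolynomial (Fin 2) k) s := by
    simp [smul_monomial]
  rw [this, map_smul, N, Module.Basis.constr_basis, smul_eq_mul]

lemma N_mul_X0 (f : MvPolynomial (Fin 2) k) (F) : N f (F * X 0) = N (pderiv 0 f) F := by
  induction F using MvPolynomial.induction_on' with
  | add p q hp hq => rw [add_mul, map_add, hp, hq, map_add]
  | monomial s c =>
    rw [X, monomial_mul, N_monomial, N_monomial, mul_one]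
    congr 1
    have hc : ∀ m, dZ m (pderiv 0 f) = pderiv 0 (dZ m f) := by
      intro m
      exact (Function.Commute.iterate_left (f := fun q => pderiv (1 : Fin 2) q)
        (g := fun q => pderiv (0 : Fin 2) q) (fun x => pderiv_swap _ _ x) m) f
    rw [hc]
    simp [dX, Function.iterate_succ_apply]

lemma N_mul_X1 (f : MvPolynomial (Fin 2) k) (F) : N f (F * X 1) = N (pderiv 1 f) F := by
  induction F using MvPolynomial.induction_on' with
  | add p q hp hq => rw [add_mul, map_add, hp, hq, map_add]
  | monomial s c =>
    rw [X, monomial_mul, N_monomial, N_monomial, mul_one]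
    congr 1
    simp [dZ, Function.iterate_succ_apply]

lemma N_mul_C (f : MvPolynomial (Fin 2) k) (F) (c) : N f (F * C c) = c * N f F := by
  rw [mul_comm, ← smul_eq_C_mul, map_smul, smul_eq_mul]

lemma dX_add (m : ℕ) (f g : MvPolynomial (Fin 2) k) : dX m (f + g) = dX m f + dX m g :=
  iterate_map_add (pderiv (R := k) (0 : Fin 2)) m f g

lemma dZ_add (m : ℕ) (f g : MvPolynomial (Fin 2) k) : dZ m (f + g) = dZ m f + dZ m g :=
  iterate_map_add (pderiv (R := k) (1 : Fin 2)) m f g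

lemma dX_smul (m : ℕ) (c : k) (f : MvPolynomial (Fin 2) k) : dX m (C c * f) = C c * dX m f := by
  induction m generalizing f with
  | zero => rfl
  | succ m ih =>
    simp only [dX, Function.iterate_succ_apply] at ih ⊢
    rw [pderiv_C_mul, ih]

lemma dZ_smul (m : ℕ) (c : k) (f : MvPolynomial (Fin 2) k) : dZ m (C c * f) = C c * dZ m f := by
  induction m generalizing f with
  | zero => rfl
  | succ m ih =>
    simp only [dZ, Function.iterate_succ_apply] at ih ⊢
    rw [pderiv_C_mul, ih]

lemma N_add_left (f g : MvPolynomial (Fin 2) k) (F) : N (f + g) F = N f F + N g F := by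
  induction F using MvPolynomial.induction_on' with
  | add p q hp hq => simp only [map_add, hp, hq]; ring
  | monomial s c => simp only [N_monomial, dX_add, dZ_add]; ring

lemma N_C_left (c : k) (f : MvPolynomial (Fin 2) k) (F) : N (C c * f) F = C c * N f F := by
  induction F using MvPolynomial.induction_on' with
  | add p q hp hq => simp only [map_add, hp, hq]; ring
  | monomial s d => simp only [N_monomial, dX_smul, dZ_smul]; ring

lemma N_one (f : MvPolynomial (Fin 2) k) : N f 1 = f := by
  rw [show (1 : MvPolynomial (Fin 2) (MvPolynomial (Fin 2) k)) = monomial 0 1 from rfl, N_monomial]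
  simp [dX, dZ]

lemma N_euler (n : ℕ) (f : MvPolynomial (Fin 2) k) (hf : f.IsHomogeneous n) :
    N f ((X 0 * C (X 0) + X 1 * C (X 1) :
      MvPolynomial (Fin 2) (MvPolynomial (Fin 2) k)) ^ n) = C (n.factorial : k) * f := by
  induction n generalizing f with
  | zero => simp [N_one]
  | succ n ih =>
    have e := hf.sum_X_mul_pderiv
    rw [Fin.sum_univ_two] at e
    rw [pow_succ, mul_add, map_add, ← mul_assoc, ← mul_assoc, N_mul_C, N_mul_C, N_mul_X0, N_mul_X1,
      ih _ (by simpa using hf.pderiv), ih _ (by simpa using hf.pderiv), Nat.factorial_succ]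
    calc _ = C (n.factorial : k) * (X 0 * pderiv 0 f + X 1 * pderiv 1 f) := by ring
      _ = _ := by rw [e]; simp [nsmul_eq_mul]; ring

/-- quadratic forms are explicit -/
lemma quad (q : MvPolynomial (Fin 2) k) (h : q.IsHomogeneous 2) :
    q = C (coeff (Finsupp.single 0 2) q) * X 0 ^ 2 +
      C (coeff (Finsupp.single 0 1 + Finsupp.single 1 1) q) * (X 0 * X 1) +
      C (coeff (Finsupp.single 1 2) q) * X 1 ^ 2 := by
  have hX : (X 0 * X 1 : MvPolynomial (Fin 2) k) =
      monomial (Finsupp.single 0 1 + Finsupp.single 1 1) 1 := by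
    simp [X, monomial_mul]
  rw [hX, X_pow_eq_monomial, X_pow_eq_monomial, C_mul_monomial, C_mul_monomial, C_mul_monomial]
  ext d
  simp only [coeff_add, coeff_monomial, mul_one]
  by_cases hd : d.degree = 2
  · have h2 : d 0 + d 1 = 2 := by
      rw [Finsupp.degree_eq_sum, Fin.sum_univ_two] at hd
      exact hd
    have key : ∀ a b : Fin 2 →₀ ℕ, a = b ↔ a 0 = b 0 ∧ a 1 = b 1 := by
      intro a b
      rw [Finsupp.ext_iff, Fin.forall_fin_two]
    have h3 : d 0 = 0 ∨ d 0 = 1 ∨ d 0 = 2 := by omega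
    rcases h3 with h3 | h3 | h3
    · obtain rfl : d = Finsupp.single 1 2 := by
        rw [key]; simp; omega
      simp [key]
    · obtain rfl : d = Finsupp.single 0 1 + Finsupp.single 1 1 := by
        rw [key]; simp; omega
      simp [key]
    · obtain rfl : d = Finsupp.single 0 2 := by
        rw [key]; simp; omega
      simp [key]
  · rw [h.coeff_eq_zero hd, if_neg, if_neg, if_neg]
    · simp
    all_goals
      rintro rfl
      apply hd
      simp [Finsupp.degree_eq_sum]

/-- a quadratic form -/
noncomputable def Q (a b c : k) : MvPolynomial (Fin 2) k :=
  C a * X 0 ^ 2 + C b * (X 0 * X 1) + C c * X 1 ^ 2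

/-- its symbol -/
noncomputable def sig (a b c : k) : MvPolynomial (Fin 2) (MvPolynomial (Fin 2) k) :=
  C (C (2 * c)) * X 0 ^ 2 - C (C (2 * b)) * (X 0 * X 1) + C (C (2 * a)) * X 1 ^ 2

lemma pderiv0_Q (a b c : k) : pderiv 0 (Q a b c) = C (2 * a) * X 0 + C b * X 1 := by
  simp [Q, pderiv_X, map_ofNat C]; ring

lemma pderiv1_Q (a b c : k) : pderiv 1 (Q a b c) = C b * X 0 + C (2 * c) * X 1 := by
  simp [Q, pderiv_X, map_ofNat C]; ring

lemma delta_Q (a b c : k) (p : MvPolynomial (Fin 2) k) :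
    deltaOp (Q a b c) p = C (2 * c) * pderiv 0 (pderiv 0 p) + C (-(2 * b)) * pderiv 1 (pderiv 0 p)
      + C (2 * a) * pderiv 1 (pderiv 1 p) := by
  simp only [deltaOp, dX, dZ, Function.iterate_succ_apply, Function.iterate_zero, id,
    pderiv0_Q, pderiv1_Q, pderiv_swap 1 0 p]
  simp only [map_add, pderiv_C_mul, pderiv_X]
  simp [map_ofNat C]; ring

lemma N_sig (a b c : k) (f : MvPolynomial (Fin 2) k) (F) :
    N f (F * sig a b c) = N (deltaOp (Q a b c) f) F := by
  have e : F * sig a b c = F * X 0 * X 0 * C (C (2 * c)) + F * X 1 * X 0 * C (C (-(2 * b)))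
      + F * X 1 * X 1 * C (C (2 * a)) := by
    simp [sig]; ring
  rw [e, delta_Q]
  simp only [map_add, N_add_left, N_C_left, N_mul_C, N_mul_X0, N_mul_X1]

lemma N_sig_pow (a b c : k) (m : ℕ) (f : MvPolynomial (Fin 2) k) (F) :
    N f (F * sig a b c ^ m) = N ((deltaOp (Q a b c))^[m] f) F := by
  induction m generalizing f with
  | zero => simp
  | succ m ih => rw [pow_succ, ← mul_assoc, N_sig, ih, Function.iterate_succ_apply]

lemma trans_Q (h2 : (2 : k) ≠ 0) (a b c a' b' c' : k) :
    transvectant 2 2 1 (Q a b c) (Q a' b' c') =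
      C ((a * b' - b * a') / 2) * X 0 ^ 2 + C (a * c' - c * a') * (X 0 * X 1) +
      C ((b * c' - c * b') / 2) * X 1 ^ 2 := by
  have h4 : (4 : k) ≠ 0 := by
    rw [show (4 : k) = 2 * 2 by norm_num]; exact mul_ne_zero h2 h2
  have e1 : (a * b' - b * a') / 2 = 1 / 4 * (2 * (a * b' - b * a')) := by field_simp; ring
  have e2 : (b * c' - c * b') / 2 = 1 / 4 * (2 * (b * c' - c * b')) := by field_simp; ring
  have e3 : a * c' - c * a' = 1 / 4 * (4 * (a * c' - c * a')) := by field_simp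
  have e4 : (((2 - 1).factorial * (2 - 1).factorial : ℕ) : k) /
      (((Nat.factorial 2 * Nat.factorial 2 : ℕ)) : k) = 1 / 4 := by norm_num [Nat.factorial]
  rw [e1, e2, e3, transvectant, e4]
  simp only [Finset.sum_range_succ, Finset.sum_range_zero, dX, dZ, Function.iterate_succ_apply,
    Function.iterate_zero, id, pderiv0_Q, pderiv1_Q, Nat.sub_self, Nat.sub_zero]
  simp only [map_mul, map_sub, map_add, map_neg, map_one, map_pow, map_ofNat, pow_zero, pow_one,
    Nat.choose_self, Nat.choose_zero_right, Nat.cast_one]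
  ring

lemma delta_hom (q p : MvPolynomial (Fin 2) k) (h : q.IsHomogeneous 2) (n : ℕ)
    (hp : p.IsHomogeneous n) : (deltaOp q p).IsHomogeneous (n - 2) := by
  rw [quad q h]
  change (deltaOp (Q _ _ _) p).IsHomogeneous _
  rw [delta_Q]
  have hh : ∀ i j, (pderiv i (pderiv j p)).IsHomogeneous (n - 2) := fun i j =>
    hp.pderiv.pderiv
  exact (((hh _ _).C_mul _).add ((hh _ _).C_mul _)).add ((hh _ _).C_mul _)

lemma delta_iter_hom (q p : MvPolynomial (Fin 2) k) (h : q.IsHomogeneous 2) (m n : ℕ)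
    (hp : p.IsHomogeneous n) : ((deltaOp q)^[m] p).IsHomogeneous (n - 2 * m) := by
  induction m generalizing p n with
  | zero => simpa
  | succ m ih =>
    rw [Function.iterate_succ_apply]
    have := ih _ _ (delta_hom q p h n hp)
    rwa [Nat.sub_sub, show 2 + 2 * m = 2 * (m + 1) by ring] at this

lemma trans_Q' (h2 : (2 : k) ≠ 0) (a b c a' b' c' : k) :
    transvectant 2 2 1 (Q a b c) (Q a' b' c') =
      C 2⁻¹ * (C (a * b' - b * a') * X 0 ^ 2 + 2 * C (a * c' - c * a') * (X 0 * X 1) +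
      C (b * c' - c * b') * X 1 ^ 2) := by
  have half : (C (2⁻¹ : k) : MvPolynomial (Fin 2) k) * 2 = 1 := by
    rw [← map_ofNat C 2, ← C_mul, inv_mul_cancel₀ h2, C_1]
  rw [trans_Q h2, div_eq_mul_inv, div_eq_mul_inv, C_mul (a := a * b' - b * a'),
    C_mul (a := b * c' - c * b')]
  linear_combination (-C (a * c' - c * a') * (X 0 * X 1)) * half

lemma sum_Q (h2 : (2 : k) ≠ 0) (a₁ b₁ c₁ a₂ b₂ c₂ a₃ b₃ c₃ R : k)
    (hR : R = Matrix.det !![a₁, b₁, c₁; a₂, b₂, c₂; a₃, b₃, c₃]) :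
    C (transvectant 2 2 1 (Q a₂ b₂ c₂) (Q a₃ b₃ c₃)) * sig a₁ b₁ c₁ +
    C (transvectant 2 2 1 (Q a₃ b₃ c₃) (Q a₁ b₁ c₁)) * sig a₂ b₂ c₂ +
    C (transvectant 2 2 1 (Q a₁ b₁ c₁) (Q a₂ b₂ c₂)) * sig a₃ b₃ c₃ =
    (C (C R) * (X 0 * C (X 0) + X 1 * C (X 1)) ^ 2 :
      MvPolynomial (Fin 2) (MvPolynomial (Fin 2) k)) := by
  have half : (C (C (2⁻¹ : k)) : MvPolynomial (Fin 2) (MvPolynomial (Fin 2) k)) * 2 = 1 := by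
    rw [← map_ofNat C 2, ← map_ofNat C 2, ← C_mul, ← C_mul, inv_mul_cancel₀ h2, C_1, C_1]
  rw [hR, Matrix.det_fin_three, trans_Q' h2, trans_Q' h2, trans_Q' h2]
  simp only [sig, Matrix.of_apply, Matrix.cons_val]
  simp only [map_mul, map_sub, map_add, map_pow, map_ofNat]
  generalize (C (C (2⁻¹ : k)) : MvPolynomial (Fin 2) (MvPolynomial (Fin 2) k)) = t at half
  linear_combination (C (C a₁) * C (C b₂) * C (C c₃) - C (C a₁) * C (C c₂) * C (C b₃)
    - C (C b₁) * C (C a₂) * C (C c₃) + C (C b₁) * C (C c₂) * C (C a₃)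
    + C (C c₁) * C (C a₂) * C (C b₃) - C (C c₁) * C (C b₂) * C (C a₃)) *
    (X 0 * C (X 0) + X 1 * C (X 1)) ^ 2 * half

lemma main_Q (h2 : (2 : k) ≠ 0) (a₁ b₁ c₁ a₂ b₂ c₂ a₃ b₃ c₃ R : k)
    (hR : R = Matrix.det !![a₁, b₁, c₁; a₂, b₂, c₂; a₃, b₃, c₃]) (r : ℕ)
    (f : MvPolynomial (Fin 2) k) (hf : f.IsHomogeneous (2 * r)) :
    C (((2 * r).factorial : k) * R ^ r) * f =
      ∑ m ∈ Finset.Nat.antidiagonalTuple 3 r,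
        C ((Nat.multinomial Finset.univ m : ℕ) : k) *
          (transvectant 2 2 1 (Q a₂ b₂ c₂) (Q a₃ b₃ c₃) ^ m 0 *
            transvectant 2 2 1 (Q a₃ b₃ c₃) (Q a₁ b₁ c₁) ^ m 1 *
            transvectant 2 2 1 (Q a₁ b₁ c₁) (Q a₂ b₂ c₂) ^ m 2) *
          (deltaOp (Q a₁ b₁ c₁))^[m 0] ((deltaOp (Q a₂ b₂ c₂))^[m 1]
            ((deltaOp (Q a₃ b₃ c₃))^[m 2] f)) := by
  have hs := sum_Q h2 a₁ b₁ c₁ a₂ b₂ c₂ a₃ b₃ c₃ R hR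
  generalize transvectant 2 2 1 (Q a₂ b₂ c₂) (Q a₃ b₃ c₃) = t₁ at *
  generalize transvectant 2 2 1 (Q a₃ b₃ c₃) (Q a₁ b₁ c₁) = t₂ at *
  generalize transvectant 2 2 1 (Q a₁ b₁ c₁) (Q a₂ b₂ c₂) = t₃ at *
  have hE := N_euler (2 * r) f hf
  have hp := congrArg (fun F => N f (F ^ r)) hs
  beta_reduce at hp
  rw [mul_pow, ← pow_mul, mul_comm (C (C R) ^ r), ← C_pow, N_mul_C, hE] at hp
  have hA : Finset.Nat.antidiagonalTuple 3 r = Finset.piAntidiag Finset.univ r := by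
    ext m
    simp [Finset.Nat.mem_antidiagonalTuple]
  have hm := Finset.sum_pow_eq_sum_piAntidiag (Finset.univ : Finset (Fin 3))
    ![C t₁ * sig a₁ b₁ c₁, C t₂ * sig a₂ b₂ c₂, C t₃ * sig a₃ b₃ c₃] r
  rw [Fin.sum_univ_three] at hm
  simp only [Matrix.cons_val] at hm
  rw [hm, map_sum] at hp
  rw [hA]
  calc _ = C R ^ r * (C ((2 * r).factorial : k) * f) := by rw [C_mul, C_pow]; ring
    _ = _ := by
      rw [← hp]
      refine Finset.sum_congr rfl fun m _ => ?_
      rw [Fin.prod_univ_three]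
      simp only [Matrix.cons_val]
      have e : ((Nat.multinomial Finset.univ m : ℕ) : MvPolynomial (Fin 2) (MvPolynomial (Fin 2) k))
        * ((C t₁ * sig a₁ b₁ c₁) ^ m 0 * (C t₂ * sig a₂ b₂ c₂) ^ m 1 * (C t₃ * sig a₃ b₃ c₃) ^ m 2)
        = 1 * sig a₁ b₁ c₁ ^ m 0 * sig a₂ b₂ c₂ ^ m 1 * sig a₃ b₃ c₃ ^ m 2 *
          C (C ((Nat.multinomial Finset.univ m : ℕ) : k) * (t₁ ^ m 0 * t₂ ^ m 1 * t₃ ^ m 2)) := by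
        simp only [map_mul, map_pow, map_natCast]
        ring
      rw [e, N_mul_C, N_sig_pow, N_sig_pow, N_sig_pow, N_one]

end S8

/-- Let `n ≥ 4` be even and `k` a field of characteristic `0` or `> n` (i.e. `n! ≠ 0` in `k`).
For a binary `n`-form `f` and binary quadratic forms `q₁,q₂,q₃` one has: each
`δ₁^{m₁}δ₂^{m₂}δ₃^{m₃}(f)` with `m₁+m₂+m₃ = n/2` is a constant, and
`n!·R(q₁,q₂,q₃)^{n/2}·f = Σ_{m₁+m₂+m₃=n/2} ((n/2)!/(m₁!m₂!m₃!)) ·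
  q₁*^{m₁}·q₂*^{m₂}·q₃*^{m₃} · δ₁^{m₁}δ₂^{m₂}δ₃^{m₃}(f)`. -/
theorem statement8 {k : Type*} [Field k] (n : ℕ) (hn : 4 ≤ n) (heven : Even n)
    (hchar : ((n.factorial : ℕ) : k) ≠ 0)
    (f : MvPolynomial (Fin 2) k) (hf : f.IsHomogeneous n)
    (q₁ q₂ q₃ : MvPolynomial (Fin 2) k)
    (h₁ : q₁.IsHomogeneous 2) (h₂ : q₂.IsHomogeneous 2) (h₃ : q₃.IsHomogeneous 2) :
    (∀ m₁ m₂ m₃ : ℕ, m₁ + m₂ + m₃ = n / 2 →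
      ∃ c : k, (deltaOp q₁)^[m₁] ((deltaOp q₂)^[m₂] ((deltaOp q₃)^[m₃] f)) = C c) ∧
    C ((n.factorial : k) * Rdet q₁ q₂ q₃ ^ (n / 2)) * f =
      ∑ m ∈ Finset.Nat.antidiagonalTuple 3 (n / 2),
        C ((Nat.multinomial Finset.univ m : ℕ) : k) *
          (transvectant 2 2 1 q₂ q₃ ^ m 0 * transvectant 2 2 1 q₃ q₁ ^ m 1 *
            transvectant 2 2 1 q₁ q₂ ^ m 2) *
          (deltaOp q₁)^[m 0] ((deltaOp q₂)^[m 1] ((deltaOp q₃)^[m 2] f)) := by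
  obtain ⟨r, hr⟩ := heven
  have hn2 : n / 2 = r := by omega
  have hnr : n = 2 * r := by omega
  rw [hn2]
  refine ⟨fun m₁ m₂ m₃ hm => ?_, ?_⟩
  · have h := S8.delta_iter_hom q₁ _ h₁ m₁ _ (S8.delta_iter_hom q₂ _ h₂ m₂ _
      (S8.delta_iter_hom q₃ f h₃ m₃ n hf))
    rw [show n - 2 * m₃ - 2 * m₂ - 2 * m₁ = 0 by omega] at h
    exact ⟨_, totalDegree_eq_zero_iff_eq_C.mp ((totalDegree_zero_iff_isHomogeneous _).mpr h)⟩
  · have h2 : (2 : k) ≠ 0 := by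
      intro h
      apply hchar
      obtain ⟨d, hd⟩ := Nat.dvd_factorial (show 0 < 2 by norm_num) (show 2 ≤ n by omega)
      rw [hd]
      push_cast
      rw [h, zero_mul]
    have main := S8.main_Q h2 _ _ _ _ _ _ _ _ _ (Rdet q₁ q₂ q₃) rfl r f (hnr ▸ hf)
    have e₁ := S8.quad q₁ h₁
    have e₂ := S8.quad q₂ h₂
    have e₃ := S8.quad q₃ h₃
    rw [← S8.Q] at e₁ e₂ e₃
    rw [← e₁, ← e₂, ← e₃, ← hnr] at main
    exact main
end

section
/- Let k be a field with algebraic closure k̄, let m ≥ 2, and let d₁, …, d_m be positive integers. Let U = (U₁,…,U_m) and V = (V₁,…,V_m) be nonzero vectors in k^m, with supports S_U = {i : U_i ≠ 0} and S_V = {i : V_i ≠ 0}. Then there exists λ ∈ k̄* with V_i = λ^{d_i}·U_i for all 1 ≤ i ≤ m if and only if S_U = S_V and, setting S = S_U, d = gcd(d_i : i ∈ S), choosing any integers (c_i)_{i∈S} with Σ_{i∈S} c_i·d_i = d, and setting Λ = Π_{i∈S} (V_i/U_i)^{c_i} ∈ k*, one has V_i/U_i = Λ^{d_i/d} for every i ∈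 S. -/
open scoped Classical

theorem bezout_aux {ι : Type*} (S : Finset ι) (d : ι → ℕ) :
    ∃ c : ι → ℤ, (∑ i ∈ S, c i * (d i : ℤ)) = ((S.gcd d : ℕ) : ℤ) := by
  classical
  induction S using Finset.induction_on with
  | empty => exact ⟨0, by simp⟩
  | insert a S ha ih =>
    obtain ⟨c, hc⟩ := ih
    refine ⟨fun i => if i = a then Nat.gcdA (d a) (S.gcd d)
      else c i * Nat.gcdB (d a) (S.gcd d), ?_⟩
    rw [Finset.sum_insert ha, Finset.gcd_insert]
    have h1 : (∑ i ∈ S, (if i = a then Nat.gcdA (d a) (S.gcd d)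
      else c i * Nat.gcdB (d a) (S.gcd d)) * (d i : ℤ)) =
        ((S.gcd d : ℕ) : ℤ) * Nat.gcdB (d a) (S.gcd d) := by
      rw [← hc, Finset.sum_mul]
      refine Finset.sum_congr rfl fun i hi => ?_
      have : i ≠ a := fun h => ha (h ▸ hi)
      rw [if_neg this]
      ring
    rw [h1]
    beta_reduce
    rw [if_pos rfl]
    have := Nat.gcd_eq_gcd_ab (d a) (S.gcd d)
    change _ = ((Nat.gcd (d a) (S.gcd d) : ℕ) : ℤ)
    rw [this]
    ring

theorem prod_zpow_aux {ι K : Type*} [Field K] (S : Finset ι) (x : K) (hx : x ≠ 0) (f : ι → ℤ) :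
    ∏ i ∈ S, x ^ f i = x ^ (∑ i ∈ S, f i) := by
  classical
  induction S using Finset.induction_on with
  | empty => simp
  | insert a S ha ih => rw [Finset.prod_insert ha, Finset.sum_insert ha, ih, zpow_add₀ hx]

/-- Equality test in a weighted projective space: for weights `d₁,…,d_m` and nonzero vectors
`U, V ∈ k^m`, there is `λ` in the algebraic closure of `k` with `V_i = λ^{d_i}·U_i` for all `i`
if and only if `U` and `V` have the same support `S` and, for any integers `(c_i)_{i∈S}` with
`Σ c_i·d_i = d := gcd(d_i : i ∈ S)`, setting `Λ = Π_{i∈S} (V_i/U_i)^{c_i}`, one has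
`V_i/U_i = Λ^{d_i/d}` for every `i ∈ S`. -/
theorem statement9 {k : Type*} [Field k] (m : ℕ) (hm : 2 ≤ m)
    (d : Fin m → ℕ) (hd : ∀ i, 0 < d i)
    (U V : Fin m → k) (hU : U ≠ 0) (hV : V ≠ 0) :
    (∃ lam : (AlgebraicClosure k)ˣ, ∀ i,
        algebraMap k (AlgebraicClosure k) (V i) =
          (lam : AlgebraicClosure k) ^ (d i) * algebraMap k (AlgebraicClosure k) (U i)) ↔
      ((Finset.univ.filter fun i => U i ≠ 0) = (Finset.univ.filter fun i => V i ≠ 0) ∧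
        ∀ c : Fin m → ℤ,
          (∑ i ∈ Finset.univ.filter fun i => U i ≠ 0, c i * (d i : ℤ)) =
            (((Finset.univ.filter fun i => U i ≠ 0).gcd d : ℕ) : ℤ) →
          ∀ i ∈ Finset.univ.filter fun i => U i ≠ 0,
            V i / U i =
              (∏ j ∈ Finset.univ.filter fun i => U i ≠ 0, (V j / U j) ^ (c j)) ^
                (d i / (Finset.univ.filter fun i => U i ≠ 0).gcd d)) := by
  set S := Finset.univ.filter fun i => U i ≠ 0 with hS
  have memS : ∀ i, i ∈ S ↔ U i ≠ 0 := fun i => by simp [hS]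
  have hne : S.Nonempty := by
    obtain ⟨i, hi⟩ := Function.ne_iff.mp hU
    exact ⟨i, (memS i).2 hi⟩
  have hg : 0 < S.gcd d := by
    obtain ⟨i, hi⟩ := hne
    exact Nat.pos_of_dvd_of_pos (Finset.gcd_dvd hi) (hd i)
  have inj := (algebraMap k (AlgebraicClosure k)).injective
  constructor
  · rintro ⟨lam, hl⟩
    have hl0 : (lam : AlgebraicClosure k) ≠ 0 := lam.ne_zero
    refine ⟨?_, ?_⟩
    · ext i
      have h := hl i
      rw [memS, Finset.mem_filter]
      simp only [Finset.mem_univ, true_and]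
      refine not_congr ⟨fun h0 => ?_, fun h0 => ?_⟩
      · rw [h0, map_zero, mul_zero] at h
        exact (map_eq_zero _).1 h
      · rw [h0, map_zero] at h
        rcases mul_eq_zero.1 h.symm with h | h
        · exact absurd h (pow_ne_zero _ hl0)
        · exact (map_eq_zero _).1 h
    · intro c hc i hi
      have key : ∀ j ∈ S, algebraMap k (AlgebraicClosure k) (V j / U j) =
          (lam : AlgebraicClosure k) ^ (d j) := by
        intro j hj
        have : algebraMap k (AlgebraicClosure k) (U j) ≠ 0 :=
          (map_ne_zero _).2 ((memS j).1 hj)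
        rw [map_div₀, hl j, mul_div_cancel_right₀ _ this]
      apply inj
      rw [key i hi, map_pow, map_prod]
      have h2 : ∏ j ∈ S, algebraMap k (AlgebraicClosure k) ((V j / U j) ^ c j) =
          (lam : AlgebraicClosure k) ^ (S.gcd d) := by
        rw [← zpow_natCast (lam : AlgebraicClosure k), ← hc, ← prod_zpow_aux _ _ hl0]
        refine Finset.prod_congr rfl fun j hj => ?_
        rw [map_zpow₀, key j hj, ← zpow_natCast, ← zpow_mul, mul_comm]
      rw [h2, ← pow_mul, Nat.mul_div_cancel' (Finset.gcd_dvd hi)]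
  · rintro ⟨hSV, h⟩
    obtain ⟨c, hc⟩ := bezout_aux S d
    have memV : ∀ i, i ∈ S ↔ V i ≠ 0 := fun i => by rw [hSV]; simp
    have h := h c hc
    set L := ∏ j ∈ S, (V j / U j) ^ (c j) with hL
    have hL0 : L ≠ 0 := Finset.prod_ne_zero_iff.2 fun j hj =>
      zpow_ne_zero _ (div_ne_zero ((memV j).1 hj) ((memS j).1 hj))
    obtain ⟨z, hz⟩ := IsAlgClosed.exists_pow_nat_eq (algebraMap k (AlgebraicClosure k) L) hg
    have hz0 : z ≠ 0 := by
      rintro rfl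
      rw [zero_pow hg.ne'] at hz
      exact hL0 ((map_eq_zero _).1 hz.symm)
    refine ⟨Units.mk0 z hz0, fun i => ?_⟩
    rw [Units.val_mk0]
    by_cases hi : i ∈ S
    · have hUi := (memS i).1 hi
      have e : V i = L ^ (d i / S.gcd d) * U i := by
        rw [← h i hi, div_mul_cancel₀ _ hUi]
      rw [e, map_mul, map_pow, ← hz, ← pow_mul, Nat.mul_div_cancel' (Finset.gcd_dvd hi)]
    · have h1 : U i = 0 := not_not.1 fun h' => hi ((memS i).2 h')
      have h2 : V i = 0 := not_not.1 fun h' => hi ((memV i).2 h')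
      rw [h1, h2, map_zero, mul_zero]
end

section
/- Let K be an algebraically closed field of characteristic different from 2, let g ≥ 2, and let {I₁,…,I_m} be a finite set of homogeneous generators, of degrees d₁,…,d_m, of the algebra 𝓘_{2g+2} of SL₂(K)-invariants of binary forms of degree 2g+2. Let f and f' be hyperelliptic polynomials of degree 2g+2 over K. Then the hyperelliptic curves C : y² = f(x) and C' : y² = f'(x) of genus g are K-isomorphic — i.e. there exist M ∈ GL₂(K) and e ∈ K* with e²·f(X,Z) = f'(M·(X,Z)) — if and only if there exists λ ∈ K* such that I_i(f') = λ^{d_i}·I_i(f) for all i = 1,…,m. -/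
open MvPolynomial

/-- The action of a matrix `M` on binary forms: `(M.f)(x,z) = f(M⁻¹·(x,z))`. -/
noncomputable def matAct {K : Type*} [Field K] (M : Matrix (Fin 2) (Fin 2) K)
    (f : MvPolynomial (Fin 2) K) : MvPolynomial (Fin 2) K :=
  bind₁ (fun j : Fin 2 => C (M⁻¹ j 0) * X 0 + C (M⁻¹ j 1) * X 1) f

/-- The coefficient vector `(a₀,…,a_n)` of a binary `n`-form, `a_i` being the coefficient of
`xⁱ·z^{n−i}`. -/
noncomputable def coeffVec {K : Type*} [Field K] (n : ℕ) (f : MvPolynomial (Fin 2) K) :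
    Fin (n + 1) → K :=
  fun i => coeff (Finsupp.single 0 (i : ℕ) + Finsupp.single 1 (n - (i : ℕ))) f

/-- A polynomial `P` in the `n+1` coefficients of a binary `n`-form is an `SL₂(K)`-invariant
if its value is unchanged under the substitution `f ↦ M.f` for every `M ∈ SL₂(K)`. -/
def IsInvariantPoly {K : Type*} [Field K] (n : ℕ) (P : MvPolynomial (Fin (n + 1)) K) : Prop :=
  ∀ M : Matrix (Fin 2) (Fin 2) K, M.det = 1 →
    ∀ f : MvPolynomial (Fin 2) K, f.IsHomogeneous n →
      eval (coeffVec n (matAct M f)) P = eval (coeffVec n f) P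

namespace HypEll

/-- The linear form with coefficient vector `v`. -/
noncomputable def lin {K : Type*} [Field K] (v : Fin 2 → K) : MvPolynomial (Fin 2) K :=
  C (v 0) * X 0 + C (v 1) * X 1

/-- Its dehomogenization. -/
noncomputable def ulin {R : Type*} [CommRing R] (v : Fin 2 → R) : Polynomial R :=
  Polynomial.C (v 0) * Polynomial.X + Polynomial.C (v 1)

/-- Coefficient vector of a product of linear forms. -/
noncomputable def cvec {R : Type*} [CommRing R] {n : ℕ} (l : Fin n → Fin 2 → R) :
    Fin (n + 1) → R :=
  fun j => (∏ i, ulin (l i)).coeff j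

/-- Dehomogenization. -/
noncomputable def dehom {K : Type*} [Field K] : MvPolynomial (Fin 2) K →ₐ[K] Polynomial K :=
  aeval ![Polynomial.X, 1]

section
variable {K : Type*} [Field K]

lemma dehom_lin (v : Fin 2 → K) : dehom (lin v) = ulin v := by
  simp [dehom, lin, ulin, Polynomial.algebraMap_eq, MvPolynomial.algHom_C]

lemma lin_homog (v : Fin 2 → K) : (lin v).IsHomogeneous 1 := by
  unfold lin
  refine IsHomogeneous.add ?_ ?_
  · simpa using (isHomogeneous_C (Fin 2) (v 0)).mul (isHomogeneous_X K (0 : Fin 2))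
  · simpa using (isHomogeneous_C (Fin 2) (v 1)).mul (isHomogeneous_X K (1 : Fin 2))

lemma prod_lin_homog {n : ℕ} (l : Fin n → Fin 2 → K) :
    (∏ i, lin (l i)).IsHomogeneous n := by
  simpa using IsHomogeneous.prod Finset.univ (fun i => lin (l i)) (fun _ => 1)
    (fun i _ => lin_homog (l i))

lemma dehom_prod {n : ℕ} (l : Fin n → Fin 2 → K) :
    dehom (∏ i, lin (l i)) = ∏ i, ulin (l i) := by
  rw [map_prod]; exact Finset.prod_congr rfl fun i _ => dehom_lin _

lemma finsupp_two (s : Fin 2 →₀ ℕ) (n j : ℕ) (h : s.degree = n) (h0 : s 0 = j) :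
    s = Finsupp.single 0 j + Finsupp.single 1 (n - j) := by
  have h2 : s 0 + s 1 = n := by
    rw [← h, Finsupp.degree_eq_sum, Fin.sum_univ_two]
  ext k
  fin_cases k
  · simp [h0]
  · simp; omega

lemma coeff_dehom {n : ℕ} {f : MvPolynomial (Fin 2) K} (hf : f.IsHomogeneous n) (j : ℕ) :
    (dehom f).coeff j = coeff (Finsupp.single 0 j + Finsupp.single 1 (n - j)) f := by
  have e : dehom f = ∑ s ∈ f.support, Polynomial.C (coeff s f) * Polynomial.X ^ (s 0) := by
    rw [dehom, aeval_def, eval₂_eq']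
    refine Finset.sum_congr rfl fun s _ => ?_
    simp [Fin.prod_univ_two, Polynomial.algebraMap_eq]
  rw [e, Polynomial.finsetSum_coeff]
  simp only [Polynomial.coeff_C_mul_X_pow]
  rw [Finset.sum_eq_single (Finsupp.single 0 j + Finsupp.single 1 (n - j))]
  · simp
  · intro s hs hne
    rw [if_neg]
    intro h0
    apply hne
    refine finsupp_two s n j ?_ h0.symm
    by_contra hd
    exact (mem_support_iff.mp hs) (hf.coeff_eq_zero hd)
  · intro hs
    rw [notMem_support_iff.mp hs, ite_self]

lemma coeffVec_prod {n : ℕ} (l : Fin n → Fin 2 → K) :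
    coeffVec n (∏ i, lin (l i)) = cvec l := by
  ext j
  rw [coeffVec, ← coeff_dehom (prod_lin_homog l) j, dehom_prod]; rfl

lemma eq_of_dehom {n : ℕ} {f f' : MvPolynomial (Fin 2) K} (hf : f.IsHomogeneous n)
    (hf' : f'.IsHomogeneous n) (h : dehom f = dehom f') : f = f' := by
  ext s
  by_cases hs : s.degree = n
  · rw [finsupp_two s n (s 0) hs rfl, ← coeff_dehom hf _, ← coeff_dehom hf' _, h]
  · rw [hf.coeff_eq_zero hs, hf'.coeff_eq_zero hs]

lemma natDegree_dehom {n : ℕ} {f : MvPolynomial (Fin 2) K} (hf : f.IsHomogeneous n) :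
    (dehom f).natDegree ≤ n := by
  have e : dehom f = ∑ s ∈ f.support, Polynomial.C (coeff s f) * Polynomial.X ^ (s 0) := by
    rw [dehom, aeval_def, eval₂_eq']
    refine Finset.sum_congr rfl fun s _ => ?_
    simp [Fin.prod_univ_two, Polynomial.algebraMap_eq]
  rw [e]
  refine Polynomial.natDegree_sum_le_of_forall_le _ _ fun s hs => ?_
  refine (Polynomial.natDegree_C_mul_X_pow_le _ _).trans ?_
  by_contra hlt
  refine (mem_support_iff.mp hs) (hf.coeff_eq_zero ?_)
  rw [Finsupp.degree_eq_sum, Fin.sum_univ_two]; omega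

lemma exists_ulin [IsAlgClosed K] (n : ℕ) : ∀ p : Polynomial K, p.natDegree ≤ n + 1 →
    ∃ l : Fin (n + 1) → Fin 2 → K, p = ∏ i, ulin (l i) := by
  induction n with
  | zero =>
    intro p hp
    refine ⟨fun _ => ![p.coeff 1, p.coeff 0], ?_⟩
    simpa [ulin] using Polynomial.eq_X_add_C_of_natDegree_le_one hp
  | succ n ih =>
    intro p hp
    by_cases h : p.natDegree ≤ n + 1
    · obtain ⟨l, hl⟩ := ih p h
      refine ⟨Fin.cons ![0, 1] l, ?_⟩
      rw [Fin.prod_univ_succ]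
      simpa [ulin] using hl
    · have hd : p.degree ≠ 0 := by
        intro h0
        have : p.natDegree = 0 := Polynomial.natDegree_eq_of_degree_eq_some h0
        omega
      obtain ⟨r, hr⟩ := IsAlgClosed.exists_root p hd
      obtain ⟨q, hq⟩ := Polynomial.dvd_iff_isRoot.mpr hr
      have hq0 : q ≠ 0 := by
        rintro rfl
        simp [hq] at h
      have : q.natDegree ≤ n + 1 := by
        have := congrArg Polynomial.natDegree hq
        rw [Polynomial.natDegree_mul (Polynomial.X_sub_C_ne_zero r) hq0,
          Polynomial.natDegree_X_sub_C] at this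
        omega
      obtain ⟨l, hl⟩ := ih q this
      refine ⟨Fin.cons ![1, -r] l, ?_⟩
      rw [Fin.prod_univ_succ, hq]
      simp only [Fin.cons_zero, Fin.cons_succ, ← hl]
      congr 1
      simp [ulin, sub_eq_add_neg]

lemma exists_lin [IsAlgClosed K] {n : ℕ} (hn : 0 < n) {f : MvPolynomial (Fin 2) K}
    (hf : f.IsHomogeneous n) : ∃ l : Fin n → Fin 2 → K, f = ∏ i, lin (l i) := by
  obtain ⟨n, rfl⟩ : ∃ m, n = m + 1 := ⟨n - 1, by omega⟩
  obtain ⟨l, hl⟩ := exists_ulin n (dehom f) (natDegree_dehom hf)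
  exact ⟨l, eq_of_dehom hf (prod_lin_homog l) (by rw [hl, dehom_prod])⟩

/-- The bracket of two vectors. -/
def br {R : Type*} [CommRing R] (v w : Fin 2 → R) : R := v 0 * w 1 - v 1 * w 0

/-- Row vector times matrix. -/
def rmul (v : Fin 2 → K) (M : Matrix (Fin 2) (Fin 2) K) : Fin 2 → K :=
  fun c => v 0 * M 0 c + v 1 * M 1 c

lemma bind_lin (M : Matrix (Fin 2) (Fin 2) K) (v : Fin 2 → K) :
    bind₁ (fun j : Fin 2 => C (M j 0) * X 0 + C (M j 1) * X 1) (lin v) = lin (rmul v M) := by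
  simp only [lin, rmul, map_add, map_mul, bind₁_C_right, bind₁_X_right]
  ring

lemma bind_prod_lin {n : ℕ} (M : Matrix (Fin 2) (Fin 2) K) (l : Fin n → Fin 2 → K) :
    bind₁ (fun j : Fin 2 => C (M j 0) * X 0 + C (M j 1) * X 1) (∏ i, lin (l i)) =
      ∏ i, lin (rmul (l i) M) := by
  rw [map_prod]; exact Finset.prod_congr rfl fun i _ => bind_lin M _

lemma lin_smul (c : K) (v : Fin 2 → K) : lin (c • v) = C c * lin v := by
  simp [lin]; ring

lemma prod_lin_smul {n : ℕ} (t : Fin n → K) (l : Fin n → Fin 2 → K) :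
    ∏ i, lin (t i • l i) = C (∏ i, t i) * ∏ i, lin (l i) := by
  simp_rw [lin_smul, Finset.prod_mul_distrib, map_prod]

lemma br_rmul (M : Matrix (Fin 2) (Fin 2) K) (v w : Fin 2 → K) :
    br (rmul v M) (rmul w M) = M.det * br v w := by
  simp [br, rmul, Matrix.det_fin_two]; ring

lemma br_ne_zero {n : ℕ} {l : Fin n → Fin 2 → K} (hs : Squarefree (∏ i, lin (l i)))
    {i j : Fin n} (hij : i ≠ j) : br (l i) (l j) ≠ 0 := by
  intro h
  have h0 : (∏ i, lin (l i)) ≠ 0 := hs.ne_zero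
  have hne : ∀ i, lin (l i) ≠ 0 := fun i => (Finset.prod_ne_zero_iff.mp h0) i (Finset.mem_univ i)
  have hdvd : lin (l i) * lin (l j) ∣ ∏ i, lin (l i) := by
    rw [← Finset.prod_pair (f := fun i => lin (l i)) hij]
    exact Finset.prod_dvd_prod_of_subset _ _ _ (Finset.subset_univ _)
  have hnu : ¬ IsUnit (lin (l i)) := by
    intro hu
    have h1 := (lin_homog (l i)).totalDegree (hne i)
    have h2 := (MvPolynomial.isUnit_iff_totalDegree_of_isReduced.mp hu).2
    omega
  have hprop : ∃ c : K, l i = c • l j := by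
    by_cases hj : l j 0 = 0
    · have hj1 : l j 1 ≠ 0 := by
        intro h1
        exact hne j (by simp [lin, hj, h1])
      refine ⟨l i 1 / l j 1, ?_⟩
      simp only [br, hj, mul_zero, sub_zero, mul_eq_zero, hj1, or_false] at h
      ext k; fin_cases k
      · simp [h, hj]
      · simp; field_simp
    · refine ⟨l i 0 / l j 0, ?_⟩
      ext k; fin_cases k
      · simp; field_simp
      · simp; field_simp
        simp only [br] at h
        linear_combination -h
  obtain ⟨c, hc⟩ := hprop
  have hc0 : c ≠ 0 := by
    rintro rfl
    apply hne i
    rw [hc]; simp [lin]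
  apply hnu
  apply hs
  refine dvd_trans ?_ hdvd
  have : lin (l i) = C c * lin (l j) := by rw [← lin_smul, ← hc]
  refine mul_dvd_mul_left _ ?_
  rw [this]
  refine ⟨C c⁻¹, ?_⟩
  have : (C c * C c⁻¹ : MvPolynomial (Fin 2) K) = 1 := by
    rw [← C_mul, mul_inv_cancel₀ hc0, C_1]
  linear_combination (- lin (l j)) * this

end

section
variable {K : Type*} [Field K] {n : ℕ}

/-- Polynomial functions of `n` vectors. -/
def PolyFun (F : (Fin n → Fin 2 → K) → K) : Prop :=
  ∃ Q : MvPolynomial (Fin n × Fin 2) K, ∀ l, eval (fun p => l p.1 p.2) Q = F l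

lemma PolyFun.const (c : K) : PolyFun (fun _ : Fin n → Fin 2 → K => c) := ⟨C c, by simp⟩

lemma PolyFun.coord (i : Fin n) (c : Fin 2) : PolyFun (fun l : Fin n → Fin 2 → K => l i c) :=
  ⟨X (i, c), by simp⟩

lemma PolyFun.add {F G : (Fin n → Fin 2 → K) → K} (hF : PolyFun F) (hG : PolyFun G) :
    PolyFun (fun l => F l + G l) := by
  obtain ⟨P, hP⟩ := hF
  obtain ⟨Q, hQ⟩ := hG
  exact ⟨P + Q, fun l => by simp [hP, hQ]⟩

lemma PolyFun.sub {F G : (Fin n → Fin 2 → K) → K} (hF : PolyFun F) (hG : PolyFun G) :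
    PolyFun (fun l => F l - G l) := by
  obtain ⟨P, hP⟩ := hF
  obtain ⟨Q, hQ⟩ := hG
  exact ⟨P - Q, fun l => by simp [hP, hQ]⟩

lemma PolyFun.mul {F G : (Fin n → Fin 2 → K) → K} (hF : PolyFun F) (hG : PolyFun G) :
    PolyFun (fun l => F l * G l) := by
  obtain ⟨P, hP⟩ := hF
  obtain ⟨Q, hQ⟩ := hG
  exact ⟨P * Q, fun l => by simp [hP, hQ]⟩

lemma PolyFun.prod {ι : Type*} (s : Finset ι) {F : ι → (Fin n → Fin 2 → K) → K}
    (hF : ∀ i, PolyFun (F i)) : PolyFun (fun l => ∏ i ∈ s, F i l) := by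
  choose P hP using hF
  exact ⟨∏ i ∈ s, P i, fun l => by simp [hP]⟩

lemma PolyFun.sum {ι : Type*} (s : Finset ι) {F : ι → (Fin n → Fin 2 → K) → K}
    (hF : ∀ i, PolyFun (F i)) : PolyFun (fun l => ∑ i ∈ s, F i l) := by
  choose P hP using hF
  exact ⟨∑ i ∈ s, P i, fun l => by simp [hP]⟩

lemma eval_cvec (l : Fin n → Fin 2 → K) (j : Fin (n + 1)) :
    eval (fun p : Fin n × Fin 2 => l p.1 p.2)
      (cvec (fun i c => (X (i, c) : MvPolynomial (Fin n × Fin 2) K)) j) = cvec l j := by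
  unfold cvec
  rw [← Polynomial.coeff_map, Polynomial.map_prod]
  simp [ulin]

lemma PolyFun.evalc (P : MvPolynomial (Fin (n + 1)) K) :
    PolyFun (fun l : Fin n → Fin 2 → K => eval (cvec l) P) := by
  refine ⟨bind₁ (cvec (fun i c => (X (i, c) : MvPolynomial (Fin n × Fin 2) K))) P, fun l => ?_⟩
  change _ = eval (cvec l) P
  rw [← MvPolynomial.coe_aeval_eq_eval, ← MvPolynomial.coe_aeval_eq_eval]
  simp only [RingHom.coe_coe]
  rw [aeval_bind₁]
  congr 2
  funext j
  have h := eval_cvec l j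
  rw [← MvPolynomial.coe_aeval_eq_eval] at h
  exact h

lemma PolyFun.dense [Infinite K] {F G : (Fin n → Fin 2 → K) → K} (hF : PolyFun F)
    (hG : PolyFun G) (h : ∀ l, (∀ i, l i 1 ≠ 0) → F l = G l) (l) : F l = G l := by
  obtain ⟨P, hP⟩ := hF
  obtain ⟨Q, hQ⟩ := hG
  have key : (∏ i, X (i, 1)) * P = (∏ i : Fin n, X (i, 1)) * Q := by
    apply MvPolynomial.funext
    intro x
    have hP' := hP (fun i c => x (i, c))
    have hQ' := hQ (fun i c => x (i, c))
    simp only [Prod.mk.eta] at hP' hQ'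
    simp only [map_mul, map_prod, eval_X]
    by_cases h0 : ∀ i, x (i, 1) ≠ 0
    · rw [hP', hQ', h _ h0]
    · push Not at h0
      obtain ⟨i, hi⟩ := h0
      rw [Finset.prod_eq_zero (Finset.mem_univ i) hi]; simp
  have : P = Q := mul_left_cancel₀ (Finset.prod_ne_zero_iff.mpr fun i _ => X_ne_zero _) key
  rw [← hP, ← hQ, this]

lemma cvec_zero (l : Fin n → Fin 2 → K) : cvec l 0 = ∏ i, l i 1 := by
  simp [cvec, ulin, Polynomial.coeff_zero_prod]

lemma homogenize (p : MvPolynomial (Fin n) K) : ∃ N : ℕ, ∃ P : MvPolynomial (Fin (n + 1)) K,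
    ∀ c : Fin (n + 1) → K, c 0 ≠ 0 →
      eval c P = c 0 ^ N * eval (fun i => c i.succ / c 0) p := by
  induction p using MvPolynomial.induction_on with
  | C a => exact ⟨0, C a, by simp⟩
  | add p q hp hq =>
    obtain ⟨N, P, hP⟩ := hp
    obtain ⟨N', P', hP'⟩ := hq
    refine ⟨N + N', X 0 ^ N' * P + X 0 ^ N * P', fun c hc => ?_⟩
    simp [hP c hc, hP' c hc]; ring
  | mul_X p i hp =>
    obtain ⟨N, P, hP⟩ := hp
    refine ⟨N + 1, P * X i.succ, fun c hc => ?_⟩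
    simp [hP c hc]; field_simp; ring

lemma cvec_esymm (l : Fin n → Fin 2 → K) (h : ∀ i, l i 1 ≠ 0) (j : Fin (n + 1)) :
    cvec l j = (∏ i, l i 1) * eval (fun i => l i 0 / l i 1) (esymm (Fin n) K j) := by
  have e : ∏ i, ulin (l i) = Polynomial.C (∏ i, l i 1) *
      ∏ i, (Polynomial.C (l i 0 / l i 1) * Polynomial.X + 1) := by
    rw [map_prod, ← Finset.prod_mul_distrib]
    refine Finset.prod_congr rfl fun i _ => ?_
    rw [ulin, mul_add, ← mul_assoc, ← Polynomial.C_mul, mul_div_cancel₀ _ (h i), mul_one]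
  rw [cvec, e, Polynomial.coeff_C_mul, Finset.prod_add]
  congr 1
  simp only [Finset.prod_const_one, mul_one, Finset.prod_mul_distrib, Finset.prod_const,
    ← map_prod, Polynomial.finsetSum_coeff, Polynomial.coeff_C_mul_X_pow]
  rw [esymm, ← Finset.sum_filter, Finset.powersetCard_eq_filter]
  simp [eq_comm]

lemma X_dvd_sub (P : MvPolynomial (Fin (n + 1)) K) :
    X 0 ∣ P - bind₁ (fun i => if i = 0 then (0 : MvPolynomial (Fin (n + 1)) K) else X i) P := by
  induction P using MvPolynomial.induction_on with
  | C a => simp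
  | add p q hp hq =>
    have := dvd_add hp hq
    rw [map_add]
    convert this using 1
    ring
  | mul_X p i hp =>
    rw [map_mul, bind₁_X_right]
    split_ifs with h
    · subst h; simp
    · rw [← sub_mul]; exact dvd_mul_of_dvd_left hp _

lemma exists_cvec [IsAlgClosed K] (hn : 0 < n) (c : Fin (n + 1) → K) :
    ∃ l : Fin n → Fin 2 → K, cvec l = c := by
  obtain ⟨n, rfl⟩ : ∃ m, n = m + 1 := ⟨n - 1, by omega⟩
  obtain ⟨l, hl⟩ := exists_ulin n (∑ i : Fin (n + 2), Polynomial.C (c i) * Polynomial.X ^ (i : ℕ))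
    (Polynomial.natDegree_sum_le_of_forall_le _ _ fun i _ =>
      (Polynomial.natDegree_C_mul_X_pow_le _ _).trans (by omega))
  refine ⟨l, ?_⟩
  ext j
  rw [cvec, ← hl, Polynomial.finsetSum_coeff]
  simp only [Polynomial.coeff_C_mul_X_pow, Fin.val_inj]
  simp

lemma descend [IsAlgClosed K] (hn : 0 < n) {F : (Fin n → Fin 2 → K) → K} (hF : PolyFun F)
    (m : ℕ) : ∀ P : MvPolynomial (Fin (n + 1)) K,
      (∀ l, eval (cvec l) P = (∏ i, l i 1) ^ m * F l) →
      ∃ P : MvPolynomial (Fin (n + 1)) K, ∀ l, eval (cvec l) P = F l := by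
  have : Infinite K := IsAlgClosed.instInfinite
  induction m with
  | zero => intro P hP; exact ⟨P, fun l => by simpa using hP l⟩
  | succ m ih =>
    intro P hP
    have h0 : bind₁ (fun i => if i = 0 then (0 : MvPolynomial (Fin (n + 1)) K) else X i) P = 0 := by
      apply MvPolynomial.funext
      intro c
      obtain ⟨l, hl⟩ := exists_cvec hn (fun i => if i = 0 then 0 else c i)
      have h1 := hP l
      have h2 := cvec_zero l
      rw [hl] at h1 h2
      simp only [if_true] at h2
      rw [← h2, pow_succ] at h1
      simp only [mul_zero, zero_mul] at h1
      rw [map_zero, ← h1, ← MvPolynomial.coe_aeval_eq_eval, ← MvPolynomial.coe_aeval_eq_eval]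
      simp only [RingHom.coe_coe]
      rw [aeval_bind₁]
      congr 2
      funext i
      split_ifs <;> simp
    have hd := X_dvd_sub P
    rw [h0, sub_zero] at hd
    obtain ⟨P', rfl⟩ := hd
    refine ih P' ?_
    refine PolyFun.dense (PolyFun.evalc P') ?_ ?_
    · refine PolyFun.mul ?_ hF
      simp only [← Fin.prod_const]
      exact PolyFun.prod _ fun _ => PolyFun.prod _ fun i => PolyFun.coord i 1
    · intro l hl
      have := hP l
      rw [map_mul, eval_X, cvec_zero, pow_succ'] at this
      exact mul_left_cancel₀ (Finset.prod_ne_zero_iff.mpr fun i _ => hl i)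
        (this.trans (mul_assoc _ _ _))

lemma exists_inv_poly [IsAlgClosed K] (hn : 0 < n) {F : (Fin n → Fin 2 → K) → K}
    (hF : PolyFun F) (hsymm : ∀ (π : Equiv.Perm (Fin n)) l, F (l ∘ π) = F l) (k : ℕ)
    (hk : ∀ (t : Fin n → K) (l), (∀ i, t i ≠ 0) → F (fun i => t i • l i) = (∏ i, t i) ^ k * F l) :
    ∃ P : MvPolynomial (Fin (n + 1)) K, ∀ l, eval (cvec l) P = F l := by
  have : Infinite K := IsAlgClosed.instInfinite
  obtain ⟨Q, hQ⟩ := id hF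
  set q : MvPolynomial (Fin n) K := bind₁ (fun p => if p.2 = 0 then X p.1 else 1) Q with hq
  have hqe : ∀ x : Fin n → K, eval x q = F (fun i => ![x i, 1]) := by
    intro x
    rw [← hQ, hq, ← MvPolynomial.coe_aeval_eq_eval, ← MvPolynomial.coe_aeval_eq_eval]
    simp only [RingHom.coe_coe]
    rw [aeval_bind₁]
    congr 2
    funext ⟨i, c⟩
    fin_cases c <;> simp
  have hqs : q.IsSymmetric := by
    intro π
    apply MvPolynomial.funext
    intro x
    rw [eval_rename, hqe, hqe, ← hsymm π (fun i => ![x i, 1])]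
    rfl
  obtain ⟨p, hp⟩ := esymmAlgHom_surjective (σ := Fin n) K (n := n) (by simp) ⟨q, hqs⟩
  have hp' : q = aeval (fun i : Fin n => esymm (Fin n) K (i + 1)) p := by
    rw [← esymmAlgHom_apply, hp]
  obtain ⟨N, P, hP⟩ := homogenize p
  refine descend hn hF N (X 0 ^ k * P) ?_
  refine PolyFun.dense (PolyFun.evalc _) ?_ ?_
  · refine PolyFun.mul ?_ hF
    simp only [← Fin.prod_const]
    exact PolyFun.prod _ fun _ => PolyFun.prod _ fun i => PolyFun.coord i 1
  · intro l hl
    have hne : ∏ i, l i 1 ≠ 0 := Finset.prod_ne_zero_iff.mpr fun i _ => hl i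
    have h1 : F l = (∏ i, l i 1) ^ k * F (fun i => ![l i 0 / l i 1, 1]) := by
      rw [← hk _ _ hl]
      congr 1
      funext i c
      fin_cases c
      · simp; field_simp [hl i]
      · simp
    have h2 : eval (fun i : Fin n => cvec l i.succ / cvec l 0) p =
        eval (fun i => l i 0 / l i 1) q := by
      rw [hp', ← MvPolynomial.coe_aeval_eq_eval, ← MvPolynomial.coe_aeval_eq_eval]
      simp only [RingHom.coe_coe]
      change _ = aeval _ (bind₁ _ p)
      rw [aeval_bind₁]
      congr 2
      funext i
      rw [cvec_zero, cvec_esymm l hl, mul_div_cancel_left₀ _ hne,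
        ← MvPolynomial.coe_aeval_eq_eval]
      simp
    rw [map_mul, map_pow, eval_X, hP _ (by rwa [cvec_zero]), h2, hqe, cvec_zero, h1]
    ring

lemma isInvariantPoly_of [IsAlgClosed K] (hn : 0 < n) {F : (Fin n → Fin 2 → K) → K}
    {P : MvPolynomial (Fin (n + 1)) K} (hP : ∀ l, eval (cvec l) P = F l)
    (hinv : ∀ (M : Matrix (Fin 2) (Fin 2) K) l, M.det = 1 → F (fun i => rmul (l i) M) = F l) :
    IsInvariantPoly n P := by
  intro M hM f hf
  obtain ⟨l, rfl⟩ := exists_lin hn hf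
  rw [matAct, bind_prod_lin, coeffVec_prod, coeffVec_prod, hP, hP, hinv]
  rw [Matrix.det_nonsing_inv, hM]; simp

end

section
variable {K : Type*} [Field K] {n : ℕ}

/-- Common factor of the two bracket monomials. -/
def Wt (i0 i1 i2 : Fin n) (l : Fin n → Fin 2 → K) (j : Fin n) : K :=
  ∏ p ∈ (((Finset.univ : Finset (Fin n)).offDiag).erase (j, i0)).erase (i2, i1),
    br (l p.1) (l p.2)

/-- Numerator of the cross-ratio. -/
def rr (i0 i1 i2 : Fin n) (l : Fin n → Fin 2 → K) (j : Fin n) : K :=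
  Wt i0 i1 i2 l j * (br (l j) (l i1) * br (l i2) (l i0))

/-- Denominator of the cross-ratio. -/
def ss (i0 i1 i2 : Fin n) (l : Fin n → Fin 2 → K) (j : Fin n) : K :=
  Wt i0 i1 i2 l j * (br (l j) (l i0) * br (l i2) (l i1))

lemma PolyFun.br (i j : Fin n) : PolyFun (fun l : Fin n → Fin 2 → K => br (l i) (l j)) :=
  ((PolyFun.coord i 0).mul (PolyFun.coord j 1)).sub ((PolyFun.coord i 1).mul (PolyFun.coord j 0))

lemma br_smul (a b : K) (v w : Fin 2 → K) : br (a • v) (b • w) = a * b * br v w := by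
  simp [br]; ring

lemma offDiag_prod (t : Fin n → K) (ht : ∀ i, t i ≠ 0) :
    ∏ p ∈ (Finset.univ : Finset (Fin n)).offDiag, (t p.1 * t p.2) = (∏ i, t i) ^ (2 * n - 2) := by
  rcases Nat.eq_zero_or_pos n with rfl | hn
  · simp
  have hne : ∏ i, t i ≠ 0 := Finset.prod_ne_zero_iff.mpr fun i _ => ht i
  have h1 : (∏ p ∈ (Finset.univ : Finset (Fin n)).diag, (t p.1 * t p.2)) = (∏ i, t i) ^ 2 := by
    rw [Finset.prod_diag, Finset.prod_mul_distrib, sq]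
  have h2 : ∏ p ∈ (Finset.univ ×ˢ Finset.univ : Finset (Fin n × Fin n)), (t p.1 * t p.2) =
      (∏ i, t i) ^ (2 * n) := by
    rw [Finset.prod_product]
    simp only [Finset.prod_mul_distrib, Finset.prod_const, Finset.card_univ, Fintype.card_fin,
      Finset.prod_pow]
    ring
  rw [← Finset.diag_union_offDiag, Finset.prod_union (Finset.disjoint_diag_offDiag _), h1,
    show 2 * n = 2 + (2 * n - 2) by omega, pow_add] at h2
  exact mul_left_cancel₀ (pow_ne_zero 2 hne) h2

variable (i0 i1 i2 : Fin n)

lemma scale_aux (h01 : i0 ≠ i1) (h12 : i1 ≠ i2) (t : Fin n → K) (ht : ∀ i, t i ≠ 0)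
    (j : Fin n) (hj : j ≠ i0) :
    (∏ p ∈ (((Finset.univ : Finset (Fin n)).offDiag).erase (j, i0)).erase (i2, i1),
      (t p.1 * t p.2)) * ((t j * t i0) * (t i2 * t i1)) = (∏ i, t i) ^ (2 * n - 2) := by
  rw [← offDiag_prod t ht, ← Finset.mul_prod_erase ((Finset.univ : Finset (Fin n)).offDiag)
    (fun p => t p.1 * t p.2) (a := (j, i0)) (by simp [hj]),
    ← Finset.mul_prod_erase (((Finset.univ : Finset (Fin n)).offDiag).erase (j, i0))
      (fun p => t p.1 * t p.2) (a := (i2, i1))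
      (by simp [h01.symm, h12.symm])]
  ring

lemma Wt_smul (t : Fin n → K) (l : Fin n → Fin 2 → K) (j : Fin n) :
    Wt i0 i1 i2 (fun i => t i • l i) j =
      (∏ p ∈ (((Finset.univ : Finset (Fin n)).offDiag).erase (j, i0)).erase (i2, i1),
      (t p.1 * t p.2)) * Wt i0 i1 i2 l j := by
  simp only [Wt, br_smul, Finset.prod_mul_distrib]

lemma rr_smul (h01 : i0 ≠ i1) (h12 : i1 ≠ i2) (t : Fin n → K) (ht : ∀ i, t i ≠ 0)
    (l : Fin n → Fin 2 → K) (j : Fin n) (hj : j ≠ i0) :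
    rr i0 i1 i2 (fun i => t i • l i) j = (∏ i, t i) ^ (2 * n - 2) * rr i0 i1 i2 l j := by
  rw [← scale_aux i0 i1 i2 h01 h12 t ht j hj, rr, rr, Wt_smul]
  simp only [br_smul]; ring

lemma ss_smul (h01 : i0 ≠ i1) (h12 : i1 ≠ i2) (t : Fin n → K) (ht : ∀ i, t i ≠ 0)
    (l : Fin n → Fin 2 → K) (j : Fin n) (hj : j ≠ i0) :
    ss i0 i1 i2 (fun i => t i • l i) j = (∏ i, t i) ^ (2 * n - 2) * ss i0 i1 i2 l j := by
  rw [← scale_aux i0 i1 i2 h01 h12 t ht j hj, ss, ss, Wt_smul]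
  simp only [br_smul]; ring

/-- One factor of the separating invariant. -/
def Gf (L : Fin n → Fin 2 → K) (u : K) (l : Fin n → Fin 2 → K) : K :=
  ∑ j ∈ Finset.univ.erase i0, u ^ (j : ℕ) *
    (rr i0 i1 i2 l j * ss i0 i1 i2 L j - rr i0 i1 i2 L j * ss i0 i1 i2 l j)

/-- The separating invariant. -/
def Ff (L : Fin n → Fin 2 → K) (u : K) (l : Fin n → Fin 2 → K) : K :=
  ∏ π : Equiv.Perm (Fin n), Gf i0 i1 i2 L u (l ∘ π)

lemma polyFun_Ff (L : Fin n → Fin 2 → K) (u : K) : PolyFun (Ff i0 i1 i2 L u) := by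
  refine PolyFun.prod _ fun π => PolyFun.sum _ fun j => (PolyFun.const _).mul ?_
  have hW : PolyFun (fun l : Fin n → Fin 2 → K => Wt i0 i1 i2 (l ∘ π) j) :=
    PolyFun.prod _ fun p => PolyFun.br (π p.1) (π p.2)
  exact ((hW.mul ((PolyFun.br _ _).mul (PolyFun.br _ _))).mul (PolyFun.const _)).sub
    ((PolyFun.const _).mul (hW.mul ((PolyFun.br _ _).mul (PolyFun.br _ _))))

lemma Ff_symm (L : Fin n → Fin 2 → K) (u : K) (σ : Equiv.Perm (Fin n)) (l) :
    Ff i0 i1 i2 L u (l ∘ σ) = Ff i0 i1 i2 L u l :=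
  Fintype.prod_equiv (Equiv.mulLeft σ) _ _ fun _ => rfl

lemma Gf_smul (h01 : i0 ≠ i1) (h12 : i1 ≠ i2) (L : Fin n → Fin 2 → K) (u : K) (t : Fin n → K)
    (ht : ∀ i, t i ≠ 0) (l : Fin n → Fin 2 → K) :
    Gf i0 i1 i2 L u (fun i => t i • l i) = (∏ i, t i) ^ (2 * n - 2) * Gf i0 i1 i2 L u l := by
  rw [Gf, Gf, Finset.mul_sum]
  refine Finset.sum_congr rfl fun j hj => ?_
  have hj' := Finset.ne_of_mem_erase hj
  rw [rr_smul i0 i1 i2 h01 h12 t ht l j hj', ss_smul i0 i1 i2 h01 h12 t ht l j hj']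
  ring

lemma Ff_smul (h01 : i0 ≠ i1) (h12 : i1 ≠ i2) (L : Fin n → Fin 2 → K) (u : K) (t : Fin n → K)
    (l : Fin n → Fin 2 → K) (ht : ∀ i, t i ≠ 0) :
    Ff i0 i1 i2 L u (fun i => t i • l i) =
      (∏ i, t i) ^ ((2 * n - 2) * Fintype.card (Equiv.Perm (Fin n))) * Ff i0 i1 i2 L u l := by
  have h : ∀ π : Equiv.Perm (Fin n), Gf i0 i1 i2 L u ((fun i => t i • l i) ∘ π) =
      (∏ i, t i) ^ (2 * n - 2) * Gf i0 i1 i2 L u (l ∘ π) := by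
    intro π
    have := Gf_smul i0 i1 i2 h01 h12 L u (t ∘ π) (fun i => ht _) (l ∘ π)
    rw [show ∏ i, (t ∘ π) i = ∏ i, t i from Equiv.prod_comp π t] at this
    exact this
  rw [Ff, Ff, Finset.prod_congr rfl fun π _ => h π, Finset.prod_mul_distrib, Finset.prod_const,
    ← pow_mul, Finset.card_univ]

lemma Ff_inv (L : Fin n → Fin 2 → K) (u : K) (M : Matrix (Fin 2) (Fin 2) K)
    (l : Fin n → Fin 2 → K) (hM : M.det = 1) :
    Ff i0 i1 i2 L u (fun i => rmul (l i) M) = Ff i0 i1 i2 L u l := by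
  simp only [Ff, Gf, rr, ss, Wt, Function.comp, br_rmul, hM, one_mul]

lemma separation [IsAlgClosed K] (h01 : i0 ≠ i1) (h12 : i1 ≠ i2) (m L : Fin n → Fin 2 → K)
    (h : ∀ P, IsInvariantPoly n P → eval (cvec L) P = eval (cvec m) P) :
    ∃ π : Equiv.Perm (Fin n), ∀ j, j ≠ i0 →
      rr i0 i1 i2 (m ∘ π) j * ss i0 i1 i2 L j = rr i0 i1 i2 L j * ss i0 i1 i2 (m ∘ π) j := by
  have : Infinite K := IsAlgClosed.instInfinite
  have hn : 0 < n := i0.pos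
  have hz : ∀ u : K, Ff i0 i1 i2 L u m = 0 := by
    intro u
    obtain ⟨P, hP⟩ := exists_inv_poly hn (polyFun_Ff i0 i1 i2 L u) (Ff_symm i0 i1 i2 L u) _
      (Ff_smul i0 i1 i2 h01 h12 L u)
    have h1 := h P (isInvariantPoly_of hn hP (Ff_inv i0 i1 i2 L u))
    rw [hP, hP] at h1
    rw [← h1]
    refine Finset.prod_eq_zero (Finset.mem_univ 1) ?_
    refine Finset.sum_eq_zero fun j _ => ?_
    simp
  set c : Equiv.Perm (Fin n) → Fin n → K := fun π j =>
    rr i0 i1 i2 (m ∘ π) j * ss i0 i1 i2 L j - rr i0 i1 i2 L j * ss i0 i1 i2 (m ∘ π) j with hc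
  have hpoly : ∏ π : Equiv.Perm (Fin n), ∑ j ∈ Finset.univ.erase i0,
      Polynomial.C (c π j) * Polynomial.X ^ (j : ℕ) = 0 := by
    apply Polynomial.funext
    intro u
    rw [Polynomial.eval_zero, ← hz u, Polynomial.eval_prod, Ff]
    refine Finset.prod_congr rfl fun π _ => ?_
    rw [Polynomial.eval_finsetSum, Gf]
    refine Finset.sum_congr rfl fun j _ => ?_
    simp [hc, mul_comm]
  obtain ⟨π, -, hπ⟩ := Finset.prod_eq_zero_iff.mp hpoly
  refine ⟨π, fun j hj => ?_⟩
  have h3 := congrArg (fun p => Polynomial.coeff p (j : ℕ)) hπ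
  simp only [Polynomial.finsetSum_coeff, Polynomial.coeff_C_mul_X_pow, Fin.val_inj,
    Polynomial.coeff_zero] at h3
  rw [Finset.sum_ite_eq, if_pos (by simp [hj])] at h3
  exact sub_eq_zero.mp h3

lemma Wt_ne_zero (l : Fin n → Fin 2 → K) (hl : ∀ i j, i ≠ j → br (l i) (l j) ≠ 0) (j : Fin n) :
    Wt i0 i1 i2 l j ≠ 0 := by
  refine Finset.prod_ne_zero_iff.mpr fun p hp => hl _ _ ?_
  have := Finset.mem_of_mem_erase (Finset.mem_of_mem_erase hp)
  simpa using this

lemma exists_matrix (h01 : i0 ≠ i1) (h02 : i0 ≠ i2) (h12 : i1 ≠ i2) (m L : Fin n → Fin 2 → K)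
    (hm : ∀ i j, i ≠ j → br (m i) (m j) ≠ 0) (hL : ∀ i j, i ≠ j → br (L i) (L j) ≠ 0)
    (h : ∀ j, j ≠ i0 → rr i0 i1 i2 m j * ss i0 i1 i2 L j = rr i0 i1 i2 L j * ss i0 i1 i2 m j) :
    ∃ M : Matrix (Fin 2) (Fin 2) K, M.det ≠ 0 ∧ ∃ t : Fin n → K, (∀ j, t j ≠ 0) ∧
      ∀ j, rmul (L j) M = t j • m j := by
  have hcr : ∀ j, br (L j) (L i1) * br (m i2) (m i1) * br (L i2) (L i0) * br (m j) (m i0) =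
      br (L j) (L i0) * br (m i2) (m i0) * br (L i2) (L i1) * br (m j) (m i1) := by
    intro j
    by_cases hj : j = i0
    · subst hj; simp [br]; ring
    · have h1 := h j hj
      simp only [rr, ss] at h1
      have hW := mul_ne_zero (Wt_ne_zero i0 i1 i2 m hm j) (Wt_ne_zero i0 i1 i2 L hL j)
      apply mul_left_cancel₀ hW
      linear_combination -h1
  set A : K := br (m i2) (m i1) * br (L i2) (L i0) with hA
  set B : K := br (m i2) (m i0) * br (L i2) (L i1) with hB
  have hA0 : A ≠ 0 := mul_ne_zero (hm _ _ h12.symm) (hL _ _ h02.symm)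
  have hB0 : B ≠ 0 := mul_ne_zero (hm _ _ h02.symm) (hL _ _ h12.symm)
  set M : Matrix (Fin 2) (Fin 2) K := Matrix.of fun r c =>
    if r = 0 then L i1 1 * A * m i0 c - L i0 1 * B * m i1 c
    else - L i1 0 * A * m i0 c + L i0 0 * B * m i1 c with hM
  have hv : ∀ v c, rmul v M c = br v (L i1) * A * m i0 c - br v (L i0) * B * m i1 c := by
    intro v c
    simp [rmul, hM, br]; ring
  refine ⟨M, ?_, ?_⟩
  · have hd : M.det = A * B * br (m i0) (m i1) * br (L i0) (L i1) := by
      simp [Matrix.det_fin_two, hM, br]; ring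
    rw [hd]
    exact mul_ne_zero (mul_ne_zero (mul_ne_zero hA0 hB0) (hm _ _ h01)) (hL _ _ h01)
  · have hex : ∀ j, ∃ t : K, t ≠ 0 ∧ rmul (L j) M = t • m j := by
      intro j
      by_cases hj0 : j = i0
      · subst hj0
        refine ⟨br (L j) (L i1) * A, mul_ne_zero (hL _ _ h01) hA0, ?_⟩
        ext c
        rw [hv]; simp [br]; ring_nf; simp
      by_cases hj1 : j = i1
      · subst hj1
        refine ⟨-(br (L j) (L i0) * B), neg_ne_zero.mpr (mul_ne_zero (hL _ _ h01.symm) hB0), ?_⟩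
        ext c
        rw [hv]; simp [br]; ring_nf; simp
      have hmj := hm _ _ hj1
      refine ⟨br (L j) (L i1) * A * br (m i0) (m i1) / br (m j) (m i1), ?_, ?_⟩
      · exact div_ne_zero (mul_ne_zero (mul_ne_zero (hL _ _ hj1) hA0) (hm _ _ h01)) hmj
      · ext c
        rw [hv]
        simp only [Pi.smul_apply, smul_eq_mul]
        rw [div_mul_eq_mul_div, eq_div_iff hmj]
        have h1 := hcr j
        have h2 : br (m j) (m i1) * m i0 c - br (m j) (m i0) * m i1 c =
            br (m i0) (m i1) * m j c := by
          fin_cases c <;> simp [br] <;> ring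
        linear_combination (br (L j) (L i1) * A) * h2 + m i1 c * h1
    choose t ht using hex
    exact ⟨t, fun j => (ht j).1, fun j => (ht j).2⟩

end

section
variable {K : Type*} [Field K] {n : ℕ}

lemma coeffVec_C_mul (c : K) (f : MvPolynomial (Fin 2) K) :
    coeffVec n (C c * f) = c • coeffVec n f := by
  ext j; simp only [coeffVec, coeff_C_mul, Pi.smul_apply, smul_eq_mul]

lemma eval_smul_homog {σ : Type*} {P : MvPolynomial σ K} {d : ℕ} (hP : P.IsHomogeneous d) (c : K)
    (x : σ → K) : eval (c • x) P = c ^ d * eval x P := by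
  rw [eval_eq, eval_eq, Finset.mul_sum]
  refine Finset.sum_congr rfl fun s hs => ?_
  have hd : s.degree = d := by
    by_contra hd
    exact (mem_support_iff.mp hs) (hP.coeff_eq_zero hd)
  simp only [Pi.smul_apply, smul_eq_mul, mul_pow, Finset.prod_mul_distrib]
  rw [Finset.prod_pow_eq_pow_sum, ← hd, Finsupp.degree_apply]
  ring

lemma eval_eq_of_adjoin {m : ℕ} {σ : Type*} {I : Fin m → MvPolynomial σ K} {x y : σ → K}
    (h : ∀ i, eval x (I i) = eval y (I i)) {P : MvPolynomial σ K}
    (hP : P ∈ Algebra.adjoin K (Set.range I)) : eval x P = eval y P := by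
  induction hP using Algebra.adjoin_induction with
  | mem p hp => obtain ⟨i, rfl⟩ := hp; exact h i
  | algebraMap r => simp [MvPolynomial.algebraMap_eq]
  | add p q _ _ hp hq => simp [hp, hq]
  | mul p q _ _ hp hq => simp [hp, hq]

end

end HypEll

/-- Let `K` be algebraically closed of characteristic `≠ 2`, `g ≥ 2`, and let `I₁,…,I_m` be
homogeneous generators of degrees `d₁,…,d_m` of the algebra of `SL₂(K)`-invariants of binary
`(2g+2)`-forms.  Two hyperelliptic polynomials `f, f'` of degree `2g+2` define `K`-isomorphic
genus-`g` hyperelliptic curves `y² = f(x)` and `y² = f'(x)` — i.e. `e²·f(X,Z) = f'(M·(X,Z))`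
for some `M ∈ GL₂(K)` and `e ∈ K*` — iff there is a `λ ∈ K*` with
`I_i(f') = λ^{d_i}·I_i(f)` for all `i`. -/
theorem statement10 {K : Type*} [Field K] [IsAlgClosed K] (hchar : (2 : K) ≠ 0)
    (g : ℕ) (hg : 2 ≤ g) (m : ℕ)
    (I : Fin m → MvPolynomial (Fin (2 * g + 2 + 1)) K) (d : Fin m → ℕ)
    (hhom : ∀ i, (I i).IsHomogeneous (d i))
    (hinv : ∀ i, IsInvariantPoly (2 * g + 2) (I i))
    (hgen : ∀ P : MvPolynomial (Fin (2 * g + 2 + 1)) K, IsInvariantPoly (2 * g + 2) P →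
      P ∈ Algebra.adjoin K (Set.range I))
    (f f' : MvPolynomial (Fin 2) K)
    (hf : f.IsHomogeneous (2 * g + 2)) (hfs : Squarefree f)
    (hf' : f'.IsHomogeneous (2 * g + 2)) (hfs' : Squarefree f') :
    (∃ (M : Matrix (Fin 2) (Fin 2) K) (e : K), IsUnit M.det ∧ e ≠ 0 ∧
        C (e ^ 2) * f = bind₁ (fun j : Fin 2 => C (M j 0) * X 0 + C (M j 1) * X 1) f') ↔
      (∃ lam : K, lam ≠ 0 ∧ ∀ i,
        eval (coeffVec (2 * g + 2) f') (I i) =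
          lam ^ (d i) * eval (coeffVec (2 * g + 2) f) (I i)) := by
  have hn : 0 < 2 * g + 2 := by omega
  obtain ⟨l', hl'⟩ := HypEll.exists_lin hn hf'
  constructor
  · rintro ⟨M, e, hM, he, h⟩
    obtain ⟨μ, hμ⟩ := IsAlgClosed.exists_pow_nat_eq M.det (n := 2) (by norm_num)
    have hμ0 : μ ≠ 0 := by
      rintro rfl
      apply hM.ne_zero
      rw [← hμ]; simp
    have hNdet : (μ⁻¹ • M).det = 1 := by
      rw [Matrix.det_smul, ← hμ]; simp; field_simp
    have hNinv : ((μ⁻¹ • M)⁻¹)⁻¹ = μ⁻¹ • M :=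
      Matrix.nonsing_inv_nonsing_inv _ (by rw [hNdet]; exact isUnit_one)
    have hact : matAct (μ⁻¹ • M)⁻¹ f' = C ((μ⁻¹) ^ (2 * g + 2) * e ^ 2) * f := by
      rw [C_mul, mul_assoc, h, matAct, hNinv, hl', HypEll.bind_prod_lin, HypEll.bind_prod_lin]
      have : ∀ i, HypEll.rmul (l' i) (μ⁻¹ • M) = μ⁻¹ • HypEll.rmul (l' i) M := by
        intro i; ext c; simp [HypEll.rmul]; ring
      simp_rw [this]
      rw [HypEll.prod_lin_smul]
      simp
    refine ⟨(μ⁻¹) ^ (2 * g + 2) * e ^ 2,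
      mul_ne_zero (pow_ne_zero _ (inv_ne_zero hμ0)) (pow_ne_zero _ he), fun i => ?_⟩
    rw [← hinv i (μ⁻¹ • M)⁻¹ (by rw [Matrix.det_nonsing_inv, hNdet]; simp) f' hf', hact,
      HypEll.coeffVec_C_mul, HypEll.eval_smul_homog (hhom i)]
  · rintro ⟨lam, hlam, h⟩
    have hfl : (C lam * f).IsHomogeneous (2 * g + 2) := by
      simpa using (isHomogeneous_C (Fin 2) lam).mul hf
    have hu : IsUnit (C lam : MvPolynomial (Fin 2) K) := (isUnit_iff_ne_zero.mpr hlam).map C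
    have hsl : Squarefree (C lam * f) := by
      have : Associated f (C lam * f) := by
        rw [mul_comm]
        exact ⟨hu.unit, rfl⟩
      exact this.squarefree_iff.mp hfs
    obtain ⟨m', hm'⟩ := HypEll.exists_lin hn hfl
    rw [hm'] at hsl
    have hsl' : Squarefree (∏ i, HypEll.lin (l' i)) := hl' ▸ hfs'
    have hev : ∀ P, IsInvariantPoly (2 * g + 2) P → eval (HypEll.cvec l') P = eval (HypEll.cvec m') P := by
      intro P hP
      refine HypEll.eval_eq_of_adjoin (fun i => ?_) (hgen P hP)
      rw [← HypEll.coeffVec_prod, ← HypEll.coeffVec_prod, ← hl', ← hm', HypEll.coeffVec_C_mul,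
        HypEll.eval_smul_homog (hhom i), h i]
    have h01 : (⟨0, by omega⟩ : Fin (2 * g + 2)) ≠ ⟨1, by omega⟩ := by simp
    have h02 : (⟨0, by omega⟩ : Fin (2 * g + 2)) ≠ ⟨2, by omega⟩ := by simp
    have h12 : (⟨1, by omega⟩ : Fin (2 * g + 2)) ≠ ⟨2, by omega⟩ := by simp
    obtain ⟨π, hπ⟩ := HypEll.separation _ _ _ h01 h12 m' l' hev
    obtain ⟨M, hM, t, ht, hMt⟩ := HypEll.exists_matrix _ _ _ h01 h02 h12 (m' ∘ π) l'
      (fun i j hij => HypEll.br_ne_zero hsl (fun hc => hij (π.injective hc)))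
      (fun i j hij => HypEll.br_ne_zero hsl' hij) hπ
    obtain ⟨e, he⟩ := IsAlgClosed.exists_pow_nat_eq ((∏ i, t i) * lam) (n := 2) (by norm_num)
    refine ⟨M, e, isUnit_iff_ne_zero.mpr hM, ?_, ?_⟩
    · rintro rfl
      have : (∏ i, t i) * lam ≠ 0 := mul_ne_zero (Finset.prod_ne_zero_iff.mpr fun i _ => ht i) hlam
      apply this
      rw [← he]; simp
    · rw [he, hl', HypEll.bind_prod_lin]
      simp_rw [hMt]
      rw [HypEll.prod_lin_smul, C_mul, mul_assoc, hm']
      congr 1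
      exact (Equiv.prod_comp π (fun i => HypEll.lin (m' i))).symm
end

section
/- Let K be a field of characteristic different from 2, let d be an odd positive integer, and let I be an invariant of binary octics over K of degree d and weight 4d (the weight of a nonzero degree-d invariant of octics is necessarily 4d). If a binary octic f ∈ K[X,Z] is GL₂(K)-equivalent to a binary octic g with g(−X,Z) = −g(X,Z) — e.g. to the homogenization of x·(x²−1)·(x⁴+u·x²+v), the normal model of genus-3 hyperelliptic curves whose automorphism group contains the cyclic group C₄ — then I(f) = 0. In particular all the odd-degree Shioda invariants J₃, J₅, J₇, J₉ vanish at such an f. -/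
open MvPolynomial

section Shioda

variable {k : Type*} [Field k]

/-- The covariant `𝔤 = (f,f)₄` of a binary octic. -/
noncomputable def covG (f : MvPolynomial (Fin 2) k) := transvectant 8 8 4 f f

/-- The covariant `𝔨 = (f,f)₆` of a binary octic. -/
noncomputable def covK (f : MvPolynomial (Fin 2) k) := transvectant 8 8 6 f f

/-- The covariant `𝔥 = (𝔨,𝔨)₂` of a binary octic. -/
noncomputable def covH (f : MvPolynomial (Fin 2) k) := transvectant 4 4 2 (covK f) (covK f)

/-- The covariant `𝔪 = (f,𝔨)₄` of a binary octic. -/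
noncomputable def covM (f : MvPolynomial (Fin 2) k) := transvectant 8 4 4 f (covK f)

/-- The covariant `𝔫 = (f,𝔥)₄` of a binary octic. -/
noncomputable def covN (f : MvPolynomial (Fin 2) k) := transvectant 8 4 4 f (covH f)

/-- The covariant `𝔭 = (𝔤,𝔨)₄` of a binary octic. -/
noncomputable def covP (f : MvPolynomial (Fin 2) k) := transvectant 8 4 4 (covG f) (covK f)

/-- The covariant `𝔮 = (𝔤,𝔥)₄` of a binary octic. -/
noncomputable def covQ (f : MvPolynomial (Fin 2) k) := transvectant 8 4 4 (covG f) (covH f)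

/-- The Shioda invariant `J₂ = (f,f)₈`. -/
noncomputable def shJ2 (f : MvPolynomial (Fin 2) k) : k :=
  constantCoeff (transvectant 8 8 8 f f)

/-- The Shioda invariant `J₃ = (f,𝔤)₈`. -/
noncomputable def shJ3 (f : MvPolynomial (Fin 2) k) : k :=
  constantCoeff (transvectant 8 8 8 f (covG f))

/-- The Shioda invariant `J₄ = (𝔨,𝔨)₄`. -/
noncomputable def shJ4 (f : MvPolynomial (Fin 2) k) : k :=
  constantCoeff (transvectant 4 4 4 (covK f) (covK f))

/-- The Shioda invariant `J₅ = (𝔪,𝔨)₄`. -/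
noncomputable def shJ5 (f : MvPolynomial (Fin 2) k) : k :=
  constantCoeff (transvectant 4 4 4 (covM f) (covK f))

/-- The Shioda invariant `J₆ = (𝔨,𝔥)₄`. -/
noncomputable def shJ6 (f : MvPolynomial (Fin 2) k) : k :=
  constantCoeff (transvectant 4 4 4 (covK f) (covH f))

/-- The Shioda invariant `J₇ = (𝔪,𝔥)₄`. -/
noncomputable def shJ7 (f : MvPolynomial (Fin 2) k) : k :=
  constantCoeff (transvectant 4 4 4 (covM f) (covH f))

/-- The Shioda invariant `J₈ = (𝔭,𝔥)₄`. -/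
noncomputable def shJ8 (f : MvPolynomial (Fin 2) k) : k :=
  constantCoeff (transvectant 4 4 4 (covP f) (covH f))

/-- The Shioda invariant `J₉ = (𝔫,𝔥)₄`. -/
noncomputable def shJ9 (f : MvPolynomial (Fin 2) k) : k :=
  constantCoeff (transvectant 4 4 4 (covN f) (covH f))

/-- The Shioda invariant `J₁₀ = (𝔮,𝔥)₄`. -/
noncomputable def shJ10 (f : MvPolynomial (Fin 2) k) : k :=
  constantCoeff (transvectant 4 4 4 (covQ f) (covH f))

end Shioda

open scoped TensorProduct

section Helpers

variable {K : Type*} [Field K]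

/-- Linear substitution by a matrix. -/
noncomputable def subst (M : Matrix (Fin 2) (Fin 2) K) :
    MvPolynomial (Fin 2) K →ₐ[K] MvPolynomial (Fin 2) K :=
  bind₁ (fun j : Fin 2 => C (M j 0) * X 0 + C (M j 1) * X 1)

lemma pderiv_subst (M : Matrix (Fin 2) (Fin 2) K) (i : Fin 2) (p : MvPolynomial (Fin 2) K) :
    pderiv i (subst M p) =
      M 0 i • subst M (pderiv 0 p) + M 1 i • subst M (pderiv 1 p) := by
  induction p using MvPolynomial.induction_on with
  | C a => simp [subst]
  | add p q hp hq => simp only [map_add, hp, hq, smul_add]; abel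
  | mul_X p j hp =>
    rw [map_mul, Derivation.leibniz, hp]
    have hX : pderiv i (subst M (X j)) = C (M j i) := by
      fin_cases i <;> simp [subst, pderiv_X]
    rw [hX]
    fin_cases j <;> simp [Derivation.leibniz, pderiv_X, MvPolynomial.smul_eq_C_mul] <;> ring

/-- The partial derivative as a linear map. -/
noncomputable def pd (i : Fin 2) : Module.End K (MvPolynomial (Fin 2) K) :=
  (pderiv i : Derivation K (MvPolynomial (Fin 2) K) (MvPolynomial (Fin 2) K)).toLinearMap

lemma pd_commute (i j : Fin 2) : Commute (pd (K := K) i) (pd j) := by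
  have h : ∀ p : MvPolynomial (Fin 2) K, pderiv i (pderiv j p) = pderiv j (pderiv i p) := by
    intro p
    have := congrArg (fun D => D p) (show ⁅(pderiv i : Derivation K (MvPolynomial (Fin 2) K)
      (MvPolynomial (Fin 2) K)), pderiv j⁆ = 0 from by
        apply MvPolynomial.derivation_ext
        intro k
        simp [Derivation.commutator_apply, pderiv_X, Pi.single_apply]
        split_ifs <;> simp)
    simp only [Derivation.commutator_apply, Derivation.coe_zero, Pi.zero_apply] at this
    exact sub_eq_zero.mp this
  exact LinearMap.ext h

/-- Cayley's omega operator. -/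
noncomputable def omegaOp : Module.End K
    (MvPolynomial (Fin 2) K ⊗[K] MvPolynomial (Fin 2) K) :=
  TensorProduct.map (pd 0) (pd 1) - TensorProduct.map (pd 1) (pd 0)

lemma map_pow' (u v : Module.End K (MvPolynomial (Fin 2) K)) (n : ℕ) :
    (TensorProduct.map u v : Module.End K
      (MvPolynomial (Fin 2) K ⊗[K] MvPolynomial (Fin 2) K)) ^ n =
    TensorProduct.map (u ^ n) (v ^ n) := by
  induction n with
  | zero => simp [Module.End.one_eq_id]
  | succ n ih => rw [pow_succ, ih, pow_succ, pow_succ]; exact (TensorProduct.map_comp _ _ _ _).symm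

lemma dX_eq (n : ℕ) (p : MvPolynomial (Fin 2) K) : dX n p = (pd 0 ^ n) p := by
  rw [Module.End.pow_apply]; rfl

lemma dZ_eq (n : ℕ) (p : MvPolynomial (Fin 2) K) : dZ n p = (pd 1 ^ n) p := by
  rw [Module.End.pow_apply]; rfl

lemma omega_pow (h : ℕ) (p q : MvPolynomial (Fin 2) K) :
    LinearMap.mul' K _ ((omegaOp ^ h) (p ⊗ₜ[K] q)) =
    ∑ j ∈ Finset.range (h + 1),
      C ((-1 : K) ^ j * (h.choose j : K)) * (dX (h - j) (dZ j p) * dX j (dZ (h - j) q)) := by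
  set B : Module.End K (MvPolynomial (Fin 2) K ⊗[K] MvPolynomial (Fin 2) K) :=
    TensorProduct.map (pd 1) (pd 0) with hB
  set A : Module.End K (MvPolynomial (Fin 2) K ⊗[K] MvPolynomial (Fin 2) K) :=
    TensorProduct.map (pd 0) (pd 1) with hA
  have hc : Commute ((-1 : K) • B) A := by
    apply Commute.smul_left
    change _ ∘ₗ _ = _ ∘ₗ _
    rw [hA, hB, ← TensorProduct.map_comp, ← TensorProduct.map_comp]
    exact congrArg₂ _ (pd_commute 1 0) (pd_commute 0 1)
  have e : omegaOp (K := K) = (-1 : K) • B + A := by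
    rw [omegaOp, ← hA, ← hB]; module
  rw [e, hc.add_pow, LinearMap.sum_apply, map_sum]
  refine Finset.sum_congr rfl fun j _ => ?_
  rw [smul_pow, hA, hB, map_pow', map_pow', dX_eq, dX_eq, dZ_eq, dZ_eq]
  have c1 : (pd 0 ^ (h - j)) ((pd 1 ^ j) p) = (pd 1 ^ j) ((pd 0 ^ (h - j)) p) :=
    LinearMap.congr_fun ((pd_commute (K := K) 0 1).pow_pow (h - j) j) p
  rw [c1]
  have e2 : ((h.choose j : ℕ) : Module.End K
      (MvPolynomial (Fin 2) K ⊗[K] MvPolynomial (Fin 2) K)) =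
      (h.choose j : K) • 1 := by
    rw [Nat.cast_smul_eq_nsmul, nsmul_one]
  rw [e2]
  simp only [Module.End.mul_apply, LinearMap.smul_apply, Module.End.one_apply, map_smul,
    TensorProduct.map_tmul, LinearMap.mul'_apply, MvPolynomial.smul_eq_C_mul, map_mul]
  ring

/-- The substitution on both tensor factors. -/
noncomputable def subst2 (M : Matrix (Fin 2) (Fin 2) K) : Module.End K
    (MvPolynomial (Fin 2) K ⊗[K] MvPolynomial (Fin 2) K) :=
  TensorProduct.map (subst M).toLinearMap (subst M).toLinearMap

lemma omega_subst2 (M : Matrix (Fin 2) (Fin 2) K) :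
    omegaOp * subst2 M = M.det • (subst2 M * omegaOp) := by
  apply TensorProduct.ext'
  intro p q
  have hpd : ∀ (i : Fin 2) (p : MvPolynomial (Fin 2) K), pd i (subst M p) =
      M 0 i • subst M (pd 0 p) + M 1 i • subst M (pd 1 p) := pderiv_subst M
  simp only [Module.End.mul_apply, omegaOp, subst2, LinearMap.sub_apply, TensorProduct.map_tmul,
    LinearMap.smul_apply, map_sub, AlgHom.toLinearMap_apply, hpd, TensorProduct.add_tmul,
    TensorProduct.tmul_add, ← TensorProduct.smul_tmul', TensorProduct.tmul_smul,
    Matrix.det_fin_two]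
  module

lemma omega_pow_subst2 (M : Matrix (Fin 2) (Fin 2) K) (h : ℕ) :
    omegaOp ^ h * subst2 M = M.det ^ h • (subst2 M * omegaOp ^ h) := by
  induction h with
  | zero => simp
  | succ h ih =>
    rw [pow_succ, mul_assoc, omega_subst2, mul_smul_comm, ← mul_assoc, ih, smul_mul_assoc,
      smul_smul, pow_succ, mul_assoc, mul_comm]

lemma mul_subst2 (M : Matrix (Fin 2) (Fin 2) K)
    (t : MvPolynomial (Fin 2) K ⊗[K] MvPolynomial (Fin 2) K) :
    LinearMap.mul' K _ (subst2 M t) = subst M (LinearMap.mul' K _ t) := by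
  induction t using TensorProduct.induction_on with
  | zero => simp
  | tmul x y => simp [subst2]
  | add x y hx hy => simp only [map_add, hx, hy]

lemma transvectant_cov (M : Matrix (Fin 2) (Fin 2) K) (r s h : ℕ) (a b : K)
    (p q : MvPolynomial (Fin 2) K) :
    transvectant r s h (C a * subst M p) (C b * subst M q) =
      C (a * b * M.det ^ h) * subst M (transvectant r s h p q) := by
  have key : LinearMap.mul' K _ ((omegaOp ^ h) ((C a * subst M p) ⊗ₜ[K] (C b * subst M q))) =
      C (a * b * M.det ^ h) * subst M (LinearMap.mul' K _ ((omegaOp ^ h) (p ⊗ₜ[K] q))) := by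
    have e : (C a * subst M p) ⊗ₜ[K] (C b * subst M q) =
        (a * b) • subst2 M (p ⊗ₜ[K] q) := by
      rw [← MvPolynomial.smul_eq_C_mul, ← MvPolynomial.smul_eq_C_mul, TensorProduct.smul_tmul_smul]
      rfl
    have := LinearMap.congr_fun (omega_pow_subst2 M h) (p ⊗ₜ[K] q)
    simp only [Module.End.mul_apply, LinearMap.smul_apply] at this
    rw [e, map_smul, this, map_smul, map_smul, mul_subst2, smul_smul,
      MvPolynomial.smul_eq_C_mul]
  unfold transvectant
  rw [← omega_pow, ← omega_pow, key, map_mul (subst M)]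
  have hC : ∀ x : K, subst M (C x) = C x := fun x => by simp [subst]
  rw [hC]
  ring

lemma covG_cov (M : Matrix (Fin 2) (Fin 2) K) (c : K) (f : MvPolynomial (Fin 2) K) :
    covG (C c * subst M f) = C (c ^ 2 * M.det ^ 4) * subst M (covG f) := by
  rw [covG, transvectant_cov, ← covG]; ring_nf

lemma covK_cov (M : Matrix (Fin 2) (Fin 2) K) (c : K) (f : MvPolynomial (Fin 2) K) :
    covK (C c * subst M f) = C (c ^ 2 * M.det ^ 6) * subst M (covK f) := by
  rw [covK, transvectant_cov, ← covK]; ring_nf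

lemma covH_cov (M : Matrix (Fin 2) (Fin 2) K) (c : K) (f : MvPolynomial (Fin 2) K) :
    covH (C c * subst M f) = C (c ^ 4 * M.det ^ 14) * subst M (covH f) := by
  rw [covH, covK_cov, transvectant_cov, ← covH]; ring_nf

lemma covM_cov (M : Matrix (Fin 2) (Fin 2) K) (c : K) (f : MvPolynomial (Fin 2) K) :
    covM (C c * subst M f) = C (c ^ 3 * M.det ^ 10) * subst M (covM f) := by
  rw [covM, covK_cov, transvectant_cov, ← covM]; ring_nf

lemma covN_cov (M : Matrix (Fin 2) (Fin 2) K) (c : K) (f : MvPolynomial (Fin 2) K) :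
    covN (C c * subst M f) = C (c ^ 5 * M.det ^ 18) * subst M (covN f) := by
  rw [covN, covH_cov, transvectant_cov, ← covN]; ring_nf

lemma constantCoeff_subst (M : Matrix (Fin 2) (Fin 2) K) (p : MvPolynomial (Fin 2) K) :
    constantCoeff (subst M p) = constantCoeff p := by
  induction p using MvPolynomial.induction_on with
  | C a => simp [subst]
  | add p q hp hq => simp only [map_add, hp, hq]
  | mul_X p j hp => simp [subst]

lemma shJ3_cov (M : Matrix (Fin 2) (Fin 2) K) (c : K) (f : MvPolynomial (Fin 2) K) :
    shJ3 (C c * subst M f) = c ^ 3 * M.det ^ 12 * shJ3 f := by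
  rw [shJ3, covG_cov, transvectant_cov, map_mul, constantCoeff_subst, constantCoeff_C, ← shJ3]
  ring

lemma shJ5_cov (M : Matrix (Fin 2) (Fin 2) K) (c : K) (f : MvPolynomial (Fin 2) K) :
    shJ5 (C c * subst M f) = c ^ 5 * M.det ^ 20 * shJ5 f := by
  rw [shJ5, covM_cov, covK_cov, transvectant_cov, map_mul, constantCoeff_subst, constantCoeff_C,
    ← shJ5]
  ring

lemma shJ7_cov (M : Matrix (Fin 2) (Fin 2) K) (c : K) (f : MvPolynomial (Fin 2) K) :
    shJ7 (C c * subst M f) = c ^ 7 * M.det ^ 28 * shJ7 f := by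
  rw [shJ7, covM_cov, covH_cov, transvectant_cov, map_mul, constantCoeff_subst, constantCoeff_C,
    ← shJ7]
  ring

lemma shJ9_cov (M : Matrix (Fin 2) (Fin 2) K) (c : K) (f : MvPolynomial (Fin 2) K) :
    shJ9 (C c * subst M f) = c ^ 9 * M.det ^ 36 * shJ9 f := by
  rw [shJ9, covN_cov, covH_cov, transvectant_cov, map_mul, constantCoeff_subst, constantCoeff_C,
    ← shJ9]
  ring

lemma eq_zero_of_neg (hchar : (2 : K) ≠ 0) {x : K} (h : x = -x) : x = 0 := by
  have : 2 * x = 0 := by linear_combination h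
  exact (mul_eq_zero.mp this).resolve_left hchar

end Helpers

/-- Let `K` be a field of characteristic `≠ 2` and suppose the binary octic `f` is
`GL₂(K)`-equivalent to an octic `g` with `g(−X,Z) = −g(X,Z)` (e.g. to the normal model
`x·(x²−1)·(x⁴+u·x²+v)` of curves whose automorphism group contains `C₄`).  Then every
invariant `I` of binary octics of odd degree `d` and weight `4d` vanishes at `f`; in
particular the odd-degree Shioda invariants `J₃, J₅, J₇, J₉` vanish at `f`. -/
theorem statement12 {K : Type*} [Field K] (hchar : (2 : K) ≠ 0)
    (f g : MvPolynomial (Fin 2) K) (hf : f.IsHomogeneous 8) (hg : g.IsHomogeneous 8)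
    (hodd : bind₁ (fun j : Fin 2 => if j = 0 then -(X 0) else X 1) g = -g)
    (hequiv : ∃ M : Matrix (Fin 2) (Fin 2) K, IsUnit M.det ∧
      f = bind₁ (fun j : Fin 2 => C (M j 0) * X 0 + C (M j 1) * X 1) g) :
    (∀ d : ℕ, Odd d → ∀ Inv : MvPolynomial (Fin 2) K → K,
      (∀ (c : K) (p : MvPolynomial (Fin 2) K), p.IsHomogeneous 8 →
        Inv (C c * p) = c ^ d * Inv p) →
      (∀ M : Matrix (Fin 2) (Fin 2) K, IsUnit M.det →
        ∀ p : MvPolynomial (Fin 2) K, p.IsHomogeneous 8 →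
          Inv (matAct M p) = M.det ^ (-(4 * (d : ℤ))) * Inv p) →
      Inv f = 0) ∧
    shJ3 f = 0 ∧ shJ5 f = 0 ∧ shJ7 f = 0 ∧ shJ9 f = 0 := by
  obtain ⟨M, hM, hfM⟩ := hequiv
  have hfM' : f = subst M g := hfM
  set D : Matrix (Fin 2) (Fin 2) K := !![-1, 0; 0, 1] with hD
  have hDdet : D.det = -1 := by simp [hD, Matrix.det_fin_two]
  have hDg : subst D g = -g := by
    rw [← hodd, subst]
    congr 2
    funext j
    fin_cases j <;> simp [hD]
  have hgD : g = C (-1) * subst D g := by rw [hDg]; simp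
  have hf1 : f = C 1 * subst M g := by rw [hfM']; simp
  refine ⟨?_, ?_, ?_, ?_, ?_⟩
  · intro d hd Inv hscal hinv
    have hDinv : D⁻¹ = D := by
      apply Matrix.inv_eq_left_inv
      ext i j
      fin_cases i <;> fin_cases j <;> simp [hD, Matrix.mul_apply]
    have h1 := hinv D (by rw [hDdet]; exact isUnit_one.neg) g hg
    have h2 : matAct D g = -g := by rw [matAct, hDinv]; exact hDg
    have h3 := hscal (-1) g hg
    have h4 : (C (-1) : MvPolynomial (Fin 2) K) * g = -g := by simp
    have h5 : ((-1 : K)) ^ (-(4 * (d : ℤ))) = 1 := by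
      apply Even.neg_one_zpow
      exact ⟨-(2 * (d : ℤ)), by ring⟩
    rw [h4, hd.neg_one_pow] at h3
    rw [h2, h3, hDdet, h5] at h1
    have h0 : Inv g = 0 := eq_zero_of_neg hchar (by linear_combination -h1)
    have hMi : IsUnit (M⁻¹).det := by
      rw [Matrix.det_nonsing_inv]
      exact hM.ringInverse
    have h6 := hinv M⁻¹ hMi g hg
    have h7 : matAct M⁻¹ g = f := by
      rw [matAct, Matrix.nonsing_inv_nonsing_inv M hM, hfM]
    rw [← h7, h6, h0, mul_zero]
  · have h := shJ3_cov D (-1) g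
    rw [← hgD, hDdet] at h
    rw [hf1, shJ3_cov, eq_zero_of_neg hchar (x := shJ3 g) (by linear_combination h), mul_zero]
  · have h := shJ5_cov D (-1) g
    rw [← hgD, hDdet] at h
    rw [hf1, shJ5_cov, eq_zero_of_neg hchar (x := shJ5 g) (by linear_combination h), mul_zero]
  · have h := shJ7_cov D (-1) g
    rw [← hgD, hDdet] at h
    rw [hf1, shJ7_cov, eq_zero_of_neg hchar (x := shJ7 g) (by linear_combination h), mul_zero]
  · have h := shJ9_cov D (-1) g
    rw [← hgD, hDdet] at h
    rw [hf1, shJ9_cov, eq_zero_of_neg hchar (x := shJ9 g) (by linear_combination h), mul_zero]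
end

section
/- Let k''/k be a finite Galois extension with Galois group G = Gal(k''/k), acting entrywise on matrices over k''. If a map σ ↦ M_σ from G to GL₂(k'') satisfies the cocycle relation M_{σ∘τ} = σ(M_τ)·M_σ for all σ, τ ∈ G, then there exists A ∈ GL₂(k'') such that M_σ = σ(A)⁻¹·A for all σ ∈ G (equivalently, σ(A) = A·M_σ⁻¹ for all σ ∈ G). -/
open Matrix in
theorem aux_nonzero {k K : Type*} [Field k] [Field K] [Algebra k K]
    [FiniteDimensional k K]
    (M : (K ≃ₐ[k] K) → Matrix (Fin 2) (Fin 2) K)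
    (hM : ∀ σ : K ≃ₐ[k] K, IsUnit (M σ).det) (u : Fin 2 → K) (hu : u ≠ 0) :
    ∃ v : Fin 2 → K, (∑ τ : K ≃ₐ[k] K, (fun i => τ (v i)) ᵥ* M τ) ⬝ᵥ u ≠ 0 := by
  by_contra! h
  apply hu
  have hli : LinearIndependent K (fun (σ : K ≃ₐ[k] K) => (fun x => σ x : K → K)) :=
    (linearIndependent_monoidHom K K).comp (fun σ : K ≃ₐ[k] K => ((σ : K →ₐ[k] K) : K →* K))
      (fun a b hab => by ext x; exact DFunLike.congr_fun hab x)
  rw [Fintype.linearIndependent_iff] at hli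
  have h1 : ∀ i, (M 1 *ᵥ u) i = 0 := by
    intro i
    refine hli (fun τ => (M τ *ᵥ u) i) ?_ 1
    ext c
    have hc := h (Pi.single i c)
    rw [sum_dotProduct] at hc
    simp only [Finset.sum_apply, Pi.smul_apply, smul_eq_mul, Pi.zero_apply]
    rw [← hc]
    refine Finset.sum_congr rfl fun τ _ => ?_
    rw [← dotProduct_mulVec]
    have : (fun j => τ ((Pi.single i c : Fin 2 → K) j)) = Pi.single i (τ c) := by
      ext j
      by_cases hj : j = i
      · subst hj; simp
      · simp [hj]
    rw [this, single_dotProduct, mul_comm]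
  have h2 : M 1 *ᵥ u = 0 := funext h1
  exact Matrix.eq_zero_of_mulVec_eq_zero (hM 1).ne_zero h2

/-- Hilbert 90 for `GL₂`: if `k''/k` is a finite Galois extension and `σ ↦ M_σ` is a map
from `Gal(k''/k)` to `GL₂(k'')` satisfying the cocycle relation
`M_{σ∘τ} = σ(M_τ)·M_σ` (where the Galois group acts entrywise on matrices), then there
exists `A ∈ GL₂(k'')` with `M_σ = σ(A)⁻¹·A` (equivalently `σ(A) = A·M_σ⁻¹`) for all `σ`. -/
theorem statement13 {k K : Type*} [Field k] [Field K] [Algebra k K]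
    [FiniteDimensional k K] [IsGalois k K]
    (M : (K ≃ₐ[k] K) → Matrix (Fin 2) (Fin 2) K)
    (hM : ∀ σ : K ≃ₐ[k] K, IsUnit (M σ).det)
    (hcoc : ∀ σ τ : K ≃ₐ[k] K, M (σ * τ) = (M τ).map ⇑σ * M σ) :
    ∃ A : Matrix (Fin 2) (Fin 2) K, IsUnit A.det ∧
      ∀ σ : K ≃ₐ[k] K, M σ = (A.map ⇑σ)⁻¹ * A ∧ A.map ⇑σ = A * (M σ)⁻¹ := by
  classical
  set b : (Fin 2 → K) → (Fin 2 → K) :=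
    fun v => ∑ τ : K ≃ₐ[k] K, Matrix.vecMul (fun i => τ (v i)) (M τ) with hb
  obtain ⟨v, hv⟩ := aux_nonzero M hM ![1, 0] (by intro h; simpa using congrFun h 0)
  obtain ⟨w, hw⟩ := aux_nonzero M hM ![b v 1, - b v 0] (by
    intro h
    apply hv
    have h0 : b v 0 = 0 := by simpa using congrFun h 1
    change dotProduct (b v) _ = 0
    simp [dotProduct, Fin.sum_univ_two, h0])
  change dotProduct (b w) _ ≠ 0 at hw
  have hinv : ∀ (σ : K ≃ₐ[k] K) v, Matrix.vecMul (fun i => σ (b v i)) (M σ) = b v := by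
    intro σ v
    have e : (fun i => σ (b v i)) =
        ∑ τ : K ≃ₐ[k] K, Matrix.vecMul (fun i => (σ * τ) (v i)) ((M τ).map ⇑σ) := by
      ext i
      simp [hb, Finset.sum_apply, Matrix.vecMul, dotProduct]
    rw [e, Matrix.sum_vecMul]
    simp only [Matrix.vecMul_vecMul, ← hcoc]
    exact Fintype.sum_equiv (Equiv.mulLeft σ) _ _ (fun τ => rfl)
  let A : Matrix (Fin 2) (Fin 2) K := Matrix.of ![b w, b v]
  have hA : IsUnit A.det := by
    rw [isUnit_iff_ne_zero]
    intro h
    apply hw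
    simp only [A, Matrix.det_fin_two] at h
    simp [dotProduct, Fin.sum_univ_two] at h ⊢
    linear_combination h
  have key : ∀ σ : K ≃ₐ[k] K, A.map ⇑σ * M σ = A := by
    intro σ
    ext i j
    fin_cases i
    · exact congrFun (hinv σ w) j
    · exact congrFun (hinv σ v) j
  refine ⟨A, hA, fun σ => ?_⟩
  have hσ : IsUnit (A.map ⇑σ).det := by
    have := key σ
    apply isUnit_of_mul_isUnit_left (y := (M σ).det)
    rw [← Matrix.det_mul, this]
    exact hA
  constructor
  · have := Matrix.nonsing_inv_mul_cancel_left _ (M σ) hσ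
    rw [key σ] at this
    exact this.symm
  · have := Matrix.mul_nonsing_inv_cancel_right _ (A.map ⇑σ) (hM σ)
    rw [key σ] at this
    exact this.symm
end

section
/- Let k be a field of characteristic different from 2, k'/k a finite Galois extension inside a fixed algebraic closure k̄, g ≥ 2, n = 2g+2, and f ∈ k'[X,Z] a binary form of degree n with n distinct roots in ℙ¹(k̄). Suppose that for every σ ∈ Gal(k'/k) there exist M_σ ∈ GL₂(k') and e_σ ∈ k'^* such that e_σ²·f(X,Z) = (σf)(M_σ·(X,Z)) (i.e. (M_σ,e_σ) is an isomorphism from the hyperelliptic curve y² = f to y² = σf), and that the cocycle relation M_{σ∘τ} = σ(M_τ)·M_σ holds for all σ, τ ∈ Gal(k'/k). Then there exist a binary form f̃ ∈ k[X,Z] of degree n with n distinct roots in ℙ¹(k̄), a matrix A ∈ GL₂(k̄) and a constant c ∈ k̄*, such that f̃(X,Z) = c·f(A·(X,Z)); in other words, the hyperelliptic curve y² = f(x) can be hyperelliptically defined over k. -/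
open MvPolynomial

namespace S14

noncomputable abbrev L {F : Type*} [Field F] (A : Matrix (Fin 2) (Fin 2) F) :
    MvPolynomial (Fin 2) F →ₐ[F] MvPolynomial (Fin 2) F :=
  bind₁ (fun j : Fin 2 => C (A j 0) * X 0 + C (A j 1) * X 1)

lemma L_comp {F : Type*} [Field F] (A B : Matrix (Fin 2) (Fin 2) F)
    (p : MvPolynomial (Fin 2) F) : L B (L A p) = L (A * B) p := by
  have : (L B).comp (L A) = L (A * B) := by
    apply MvPolynomial.algHom_ext
    intro j
    simp [L, Matrix.mul_apply, Fin.sum_univ_two, bind₁_X_right, algHom_C, algebraMap_eq]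
    ring
  exact DFunLike.congr_fun this p

lemma L_one {F : Type*} [Field F] (p : MvPolynomial (Fin 2) F) : L 1 p = p := by
  have : (L (1 : Matrix (Fin 2) (Fin 2) F)) = AlgHom.id F _ := by
    apply MvPolynomial.algHom_ext
    intro j
    fin_cases j <;> simp [L, bind₁_X_right]
  exact DFunLike.congr_fun this p

lemma L_map {F E : Type*} [Field F] [Field E] (φ : F →+* E) (A : Matrix (Fin 2) (Fin 2) F)
    (p : MvPolynomial (Fin 2) F) :
    MvPolynomial.map φ (L A p) = L (A.map φ) (MvPolynomial.map φ p) := by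
  simp only [L, map_bind₁]
  simp

lemma L_hom {F : Type*} [Field F] (A : Matrix (Fin 2) (Fin 2) F)
    (p : MvPolynomial (Fin 2) F) {n : ℕ} (h : p.IsHomogeneous n) : (L A p).IsHomogeneous n := by
  have := h.aeval (fun j : Fin 2 =>
    (C (A j 0) * X 0 + C (A j 1) * X 1 : MvPolynomial (Fin 2) F)) (n := 1) (by
    intro j
    exact ((isHomogeneous_C_mul_X _ _).add (isHomogeneous_C_mul_X _ _)))
  rw [one_mul] at this
  exact this

lemma L_squarefree {F : Type*} [Field F] (A : Matrix (Fin 2) (Fin 2) F) (hA : IsUnit A.det)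
    (c : F) (hc : c ≠ 0) (p : MvPolynomial (Fin 2) F) (h : Squarefree p) :
    Squarefree (C c * L A p) := by
  intro x hx
  have hu : IsUnit (C c : MvPolynomial (Fin 2) F) := (Ne.isUnit hc).map C
  rw [hu.dvd_mul_left] at hx
  have h2 := map_dvd (L A⁻¹) hx
  rw [L_comp, Matrix.mul_nonsing_inv _ hA, L_one, map_mul] at h2
  have h3 := (h _ h2).map (L A)
  rwa [L_comp, Matrix.nonsing_inv_mul _ hA, L_one] at h3

section H90
variable {k k' : Type*} [Field k] [Field k'] [Algebra k k'] [FiniteDimensional k k']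

/-- The averaged vector. -/
noncomputable def b (N : (k' ≃ₐ[k] k') → Matrix (Fin 2) (Fin 2) k') (y : Fin 2 → k') :
    Fin 2 → k' := ∑ τ, (N τ).mulVec (fun i => τ (y i))

lemma exists_b (N : (k' ≃ₐ[k] k') → Matrix (Fin 2) (Fin 2) k') (h1 : IsUnit (N 1).det)
    (u : Fin 2 → k') (hu : u ≠ 0) : ∃ y, u ⬝ᵥ b N y ≠ 0 := by
  by_contra! hcon
  apply hu
  have key : ∀ j : Fin 2, Matrix.vecMul u (N 1) j = 0 := by
    intro j
    have li := linearIndependent_monoidHom k' k'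
    have inj : Function.Injective
        (fun τ : k' ≃ₐ[k] k' => ((τ : k' →+* k') : k' →* k')) := by
      intro s t hst
      ext x
      exact DFunLike.congr_fun hst x
    have li2 := li.comp _ inj
    rw [Fintype.linearIndependent_iff] at li2
    refine li2 (fun τ => Matrix.vecMul u (N τ) j) ?_ 1
    funext a
    have := hcon (Pi.single j a)
    rw [b, dotProduct_sum] at this
    rw [Finset.sum_apply, Pi.zero_apply, ← this]
    refine Finset.sum_congr rfl fun τ _ => ?_
    rw [Matrix.dotProduct_mulVec]
    have : (fun i => τ ((Pi.single j a : Fin 2 → k') i)) = Pi.single j (τ a) := by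
      funext i
      by_cases h : i = j
      · subst h; simp
      · simp [h]
    rw [this, dotProduct_single]
    simp
  have h0 : Matrix.vecMul u (N 1) = 0 := funext key
  have := congrArg (fun v => Matrix.vecMul v (N 1)⁻¹) h0
  simpa [Matrix.vecMul_vecMul, Matrix.mul_nonsing_inv _ h1] using this

lemma hilbert90 (M : (k' ≃ₐ[k] k') → Matrix (Fin 2) (Fin 2) k')
    (hMdet : ∀ σ, IsUnit (M σ).det)
    (hcoc : ∀ σ τ : k' ≃ₐ[k] k', M (σ * τ) = (M τ).map ⇑σ * M σ) :
    ∃ B : Matrix (Fin 2) (Fin 2) k', IsUnit B.det ∧ ∀ σ : k' ≃ₐ[k] k', B.map σ = M σ * B := by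
  set N : (k' ≃ₐ[k] k') → Matrix (Fin 2) (Fin 2) k' := fun σ => (M σ)⁻¹ with hN
  have hN1 : IsUnit (N 1).det := by
    simpa [hN] using (Matrix.isUnit_nonsing_inv_det _ (hMdet 1))
  have hNs : ∀ σ τ : k' ≃ₐ[k] k', (N τ).map σ = M σ * N (σ * τ) := by
    intro σ τ
    have e1 : (M τ).map σ * (N τ).map σ = 1 := by
      rw [← Matrix.map_mul, Matrix.mul_nonsing_inv _ (hMdet τ)]
      simp
    have e2 : (M τ).map σ * (M σ * N (σ * τ)) = 1 := by
      rw [← mul_assoc, ← hcoc, Matrix.mul_nonsing_inv _ (hMdet _)]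
    exact (Matrix.inv_eq_right_inv e1).symm.trans (Matrix.inv_eq_right_inv e2)
  have hb : ∀ (σ : k' ≃ₐ[k] k') y, (fun i => σ (b N y i)) = (M σ).mulVec (b N y) := by
    intro σ y
    have : (M σ).mulVec (b N y) = ∑ τ, ((N τ).map σ).mulVec (fun i => σ (τ (y i))) := by
      rw [b, Matrix.mulVec_sum, ← Equiv.sum_comp (Equiv.mulLeft σ)]
      refine Finset.sum_congr rfl fun τ _ => ?_
      rw [Matrix.mulVec_mulVec, Equiv.coe_mulLeft, ← hNs]
      rfl
    rw [this]
    funext i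
    fin_cases i <;> simp [b, Finset.sum_apply, Matrix.mulVec, dotProduct]
  obtain ⟨y, hy⟩ := exists_b N hN1 (Pi.single 0 1) (by simp)
  set v := b N y with hv
  have hv0 : v 0 ≠ 0 := by simpa using hy
  obtain ⟨z, hz⟩ := exists_b N hN1 ![-v 1, v 0] (by
    intro h
    exact hv0 (by simpa using congrFun h 1))
  set w := b N z with hw
  refine ⟨!![v 0, w 0; v 1, w 1], ?_, ?_⟩
  · rw [Matrix.det_fin_two_of, isUnit_iff_ne_zero]
    simp [dotProduct, Fin.sum_univ_two] at hz
    intro h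
    apply hz
    linear_combination h
  · intro σ
    have h1 := hb σ y
    have h2 := hb σ z
    rw [← hv] at h1
    rw [← hw] at h2
    ext i j
    have a1 := congrFun h1 i
    have a2 := congrFun h2 i
    simp only [Matrix.mulVec, dotProduct, Fin.sum_univ_two] at a1 a2
    fin_cases j
    · fin_cases i <;> simpa [Matrix.mul_apply, Fin.sum_univ_two] using a1
    · fin_cases i <;> simpa [Matrix.mul_apply, Fin.sum_univ_two] using a2
end H90
end S14


/-- Galois descent of hyperelliptic equations: let `k` be a field of characteristic `≠ 2`,
`k'/k` a finite Galois extension inside a fixed algebraic closure `K` of `k`, `g ≥ 2`,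
`n = 2g+2`, and `f ∈ k'[X,Z]` a binary `n`-form with `n` distinct roots in `ℙ¹(K)` (i.e.
squarefree over `K`).  If for every `σ ∈ Gal(k'/k)` there are `M_σ ∈ GL₂(k')`, `e_σ ∈ k'^*`
with `e_σ²·f(X,Z) = (σf)(M_σ·(X,Z))` and the cocycle relation `M_{σ∘τ} = σ(M_τ)·M_σ` holds,
then there is a binary `n`-form `f̃ ∈ k[X,Z]` with `n` distinct roots in `ℙ¹(K)`, a matrix
`A ∈ GL₂(K)` and `c ∈ K*` with `f̃(X,Z) = c·f(A·(X,Z))`: the hyperelliptic curve `y² = f(x)`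
can be hyperelliptically defined over `k`. -/
theorem statement14 {k k' K : Type*} [Field k] [Field k'] [Field K]
    [Algebra k k'] [FiniteDimensional k k'] [IsGalois k k']
    [Algebra k' K] [Algebra k K] [IsScalarTower k k' K] [IsAlgClosure k K]
    (hchar : (2 : k) ≠ 0)
    (g : ℕ) (hg : 2 ≤ g)
    (f : MvPolynomial (Fin 2) k') (hfh : f.IsHomogeneous (2 * g + 2))
    (hfs : Squarefree (MvPolynomial.map (algebraMap k' K) f))
    (M : (k' ≃ₐ[k] k') → Matrix (Fin 2) (Fin 2) k')
    (e : (k' ≃ₐ[k] k') → k')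
    (hMdet : ∀ σ, IsUnit (M σ).det)
    (he : ∀ σ, e σ ≠ 0)
    (hiso : ∀ σ : k' ≃ₐ[k] k',
      C (e σ ^ 2) * f =
        bind₁ (fun j : Fin 2 => C (M σ j 0) * X 0 + C (M σ j 1) * X 1)
          (MvPolynomial.map σ.toAlgHom.toRingHom f))
    (hcoc : ∀ σ τ : k' ≃ₐ[k] k', M (σ * τ) = (M τ).map ⇑σ * M σ) :
    ∃ ft : MvPolynomial (Fin 2) k, ft.IsHomogeneous (2 * g + 2) ∧
      Squarefree (MvPolynomial.map (algebraMap k K) ft) ∧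
      ∃ (A : Matrix (Fin 2) (Fin 2) K) (c : K), IsUnit A.det ∧ c ≠ 0 ∧
        MvPolynomial.map (algebraMap k K) ft =
          C c * bind₁ (fun j : Fin 2 => C (A j 0) * X 0 + C (A j 1) * X 1)
            (MvPolynomial.map (algebraMap k' K) f) := by
  obtain ⟨B, hB, hBs⟩ := S14.hilbert90 M hMdet hcoc
  set h := S14.L B f with hh
  have hf0 : f ≠ 0 := by
    rintro rfl
    rw [map_zero] at hfs
    exact not_squarefree_zero hfs
  have hne : h ≠ 0 := by
    intro h0
    apply hf0
    have := congrArg (S14.L B⁻¹) h0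
    rwa [hh, S14.L_comp, Matrix.mul_nonsing_inv _ hB, S14.L_one, map_zero] at this
  have hs : ∀ σ : k' ≃ₐ[k] k', MvPolynomial.map σ.toAlgHom.toRingHom h = C (e σ ^ 2) * h := by
    intro σ
    have h1 : B.map σ.toAlgHom.toRingHom = M σ * B := hBs σ
    rw [hh, S14.L_map, h1, ← S14.L_comp]
    have h2 := congrArg (S14.L B) (hiso σ)
    rw [map_mul, algHom_C, algebraMap_eq] at h2
    exact h2.symm
  obtain ⟨d, hd⟩ := MvPolynomial.ne_zero_iff.mp hne
  set a := coeff d h with ha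
  have hco : ∀ (σ : k' ≃ₐ[k] k') m, σ (coeff m h) = e σ ^ 2 * coeff m h := by
    intro σ m
    have := congrArg (coeff m) (hs σ)
    rwa [coeff_map, coeff_C_mul] at this
  have hrange : (C a⁻¹ * h) ∈ Set.range (MvPolynomial.map (σ := Fin 2) (algebraMap k k')) := by
    rw [mem_range_map_iff_coeffs_subset]
    intro x hx
    obtain ⟨m, -, rfl⟩ := mem_coeffs_iff.mp hx
    rw [coeff_C_mul]
    refine (IsGalois.mem_range_algebraMap_iff_fixed _).mpr fun σ => ?_
    rw [map_mul, map_inv₀, hco, hco, ← ha]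
    have := he σ
    field_simp
  obtain ⟨ft, hft⟩ := hrange
  have hK : MvPolynomial.map (algebraMap k K) ft =
      C (algebraMap k' K a⁻¹) * S14.L (B.map (algebraMap k' K))
        (MvPolynomial.map (algebraMap k' K) f) := by
    rw [← S14.L_map, ← hh, ← map_C, ← map_mul, ← hft, MvPolynomial.map_map,
      IsScalarTower.algebraMap_eq k k' K]
  have hdet : IsUnit (B.map (algebraMap k' K)).det := by
    have := hB.map (algebraMap k' K)
    rwa [RingHom.map_det] at this
  have hc : algebraMap k' K a⁻¹ ≠ 0 := by
    simpa using hd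
  refine ⟨ft, ?_, ?_, B.map (algebraMap k' K), algebraMap k' K a⁻¹, hdet, hc, hK⟩
  · refine IsHomogeneous.of_map (algebraMap k k').injective (f := algebraMap k k') ?_
    rw [hft]
    exact (S14.L_hom B f hfh).C_mul _
  · rw [hK]
    exact S14.L_squarefree _ hdet _ hc _ hfs
end
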